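/- arXiv:2406.14987 — 3 statements merged into one kernel-verified Lean document; each statement's English description precedes it below -/
import Mathlib

section
/- Let N ≥ 2 be a natural number and f : [1,N] → ℝ a C² function with |f(x)| ≤ 1, x|f'(x)| ≤ 1, and x²|f''(x)| ≤ 1 for all x ∈ [1,N]. Then there exists a C² function g : (0,∞) → ℝ with support contained in [1/e, eN] that extends f, satisfying |g(x)| ≤ 10/9, x|g'(x)| ≤ 7/3, and x²|g''(x)| ≤ 41/5 for all x > 0. -/
open Set

/-
In the variable `t = log x` the weights disappear: with `F t = f (exp t)` the hypotheses read
`|F|, |F'|, |F'' - F'| ≤ 1`, and the extension must be found within distance `1` of either end of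
the interval. Beyond an endpoint we use a cubic spline `∑ c_j (τ_j - θ)₊³` in the rescaled distance
`θ` to that endpoint: it is of class `C²` and vanishes beyond its last knot, so only the `2`-jet at
the endpoint has to be matched, and the `c_j` can be taken linear in that jet. On each cell between
consecutive integers, a spline with integer knots is a polynomial bounded by its largest Bernstein
coefficient. The Bernstein coefficients are again linear in the three data, which are at most `1`
in absolute value, so the required bounds reduce to finitely many inequalities between integers.
-/

section Glue

variable {α : Type*} {p t : ℝ} {u v : ℕ → ℝ → α} {i : ℕ}

/-- The jet that is `u` to the left of `p` and `v` to the right of `p`. -/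
noncomputable def glueJet (p : ℝ) (u v : ℕ → ℝ → α) (i : ℕ) (t : ℝ) : α :=
  if t ≤ p then u i t else v i t

theorem glueJet_of_le (ht : t ≤ p) : glueJet p u v i t = u i t := if_pos ht

theorem glueJet_of_ge (h : u i p = v i p) (ht : p ≤ t) : glueJet p u v i t = v i t := by
  rcases ht.eq_or_lt with rfl | ht
  · rw [glueJet_of_le le_rfl, h]
  · exact if_neg ht.not_ge

end Glue

section Jets

variable {E : Type*} [NormedAddCommGroup E] [NormedSpace ℝ E]

/-- `u 0` is of class `C^n` on `S` with `u 1, …, u n` as its successive derivatives within `S`.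
Carrying the derivatives as explicit functions keeps bounds on them readable through gluing and
changes of variable; the entries `u i` with `i > n` play no role. -/
structure HasJetOn (n : ℕ) (u : ℕ → ℝ → E) (S : Set ℝ) : Prop where
  hasDerivWithinAt : ∀ i < n, ∀ x ∈ S, HasDerivWithinAt (u i) (u (i + 1) x) S x
  continuousOn_last : ContinuousOn (u n) S

namespace HasJetOn

variable {n : ℕ} {u v : ℕ → ℝ → E} {S T : Set ℝ} {f : ℝ → E} {p : ℝ}

theorem of_contDiffOn (hS : UniqueDiffOn ℝ S) (hf : ContDiffOn ℝ n f S) :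
    HasJetOn n (fun i => iteratedDerivWithin i f S) S where
  hasDerivWithinAt i hi x hx := by
    rw [iteratedDerivWithin_succ]
    exact (hf.differentiableOn_iteratedDerivWithin (mod_cast hi) hS x hx).hasDerivWithinAt
  continuousOn_last := hf.continuousOn_iteratedDerivWithin le_rfl hS

theorem continuousOn (hu : HasJetOn n u S) {i : ℕ} (hi : i ≤ n) : ContinuousOn (u i) S := by
  rcases hi.eq_or_lt with rfl | hi
  · exact hu.continuousOn_last
  · exact fun x hx => (hu.hasDerivWithinAt i hi x hx).continuousWithinAt

theorem eqOn_iteratedDerivWithin (hu : HasJetOn n u S) (hS : UniqueDiffOn ℝ S) {i : ℕ}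
    (hi : i ≤ n) : EqOn (iteratedDerivWithin i (u 0) S) (u i) S := by
  induction i with
  | zero => intro x _; simp only [iteratedDerivWithin_zero]
  | succ i ih =>
    intro x hx
    have ih := ih (Nat.le_of_succ_le hi)
    rw [iteratedDerivWithin_succ, derivWithin_congr ih (ih hx)]
    exact (hu.hasDerivWithinAt i hi x hx).derivWithin (hS x hx)

theorem contDiffOn (hu : HasJetOn n u S) (hS : UniqueDiffOn ℝ S) : ContDiffOn ℝ n (u 0) S := by
  refine (contDiffOn_nat_iff_continuousOn_differentiableOn_deriv hS).2
    ⟨fun i hi => ?_, fun i hi => ?_⟩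
  · exact (hu.continuousOn hi).congr (hu.eqOn_iteratedDerivWithin hS hi)
  · exact DifferentiableOn.congr
      (fun x hx => (hu.hasDerivWithinAt i hi x hx).differentiableWithinAt)
      (hu.eqOn_iteratedDerivWithin hS hi.le)

theorem congr (hu : HasJetOn n u S) (huv : ∀ i ≤ n, EqOn (v i) (u i) S) : HasJetOn n v S where
  hasDerivWithinAt i hi x hx := by
    rw [huv (i + 1) hi hx]
    exact (hu.hasDerivWithinAt i hi x hx).congr (huv i hi.le) (huv i hi.le hx)
  continuousOn_last := hu.continuousOn_last.congr (huv n le_rfl)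

theorem mono (hu : HasJetOn n u S) (hTS : T ⊆ S) : HasJetOn n u T where
  hasDerivWithinAt i hi x hx := (hu.hasDerivWithinAt i hi x (hTS hx)).mono hTS
  continuousOn_last := hu.continuousOn_last.mono hTS

theorem union_of_isClosed (hS : HasJetOn n u S) (hT : HasJetOn n u T) (hSc : IsClosed S)
    (hTc : IsClosed T) : HasJetOn n u (S ∪ T) where
  hasDerivWithinAt i hi x _ := by
    have hasDeriv {R : Set ℝ} (hR : HasJetOn n u R) (hRc : IsClosed R) :
        HasDerivWithinAt (u i) (u (i + 1) x) R x := by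
      by_cases hx : x ∈ R
      · exact hR.hasDerivWithinAt i hi x hx
      · exact hasDerivWithinAt_iff_hasFDerivWithinAt.2
          (.of_notMem_closure (hRc.closure_eq.symm ▸ hx))
    exact (hasDeriv hS hSc).union (hasDeriv hT hTc)
  continuousOn_last := hS.continuousOn_last.union_of_isClosed hT.continuousOn_last hSc hTc

theorem glue (hu : HasJetOn n u S) (hv : HasJetOn n v T) (hSc : IsClosed S)
    (hTc : IsClosed T) (hSp : S ⊆ Iic p) (hpT : T ⊆ Ici p) (h : ∀ i ≤ n, u i p = v i p) :
    HasJetOn n (glueJet p u v) (S ∪ T) :=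
  (hu.congr fun _ _ _ hx => glueJet_of_le (hSp hx)).union_of_isClosed
    (hv.congr fun i hi _ hx => glueJet_of_ge (h i hi) (hpT hx)) hSc hTc

theorem comp_affine (hu : HasJetOn n u S) (c p : ℝ) (hT : MapsTo (fun t => c * (t - p)) T S) :
    HasJetOn n (fun i t => c ^ i • u i (c * (t - p))) T where
  hasDerivWithinAt i hi t ht := by
    have affine : HasDerivWithinAt (fun t => c * (t - p)) c T t := by
      simpa using (((hasDerivAt_id t).sub_const p).const_mul c).hasDerivWithinAt
    have := ((hu.hasDerivWithinAt i hi _ (hT ht)).scomp t affine hT).const_smul (c ^ i)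
    rwa [smul_smul, ← pow_succ] at this
  continuousOn_last :=
    (hu.continuousOn_last.comp (by fun_prop) hT).const_smul (c ^ n)

end HasJetOn

/-- The `2`-jet of `u 0 ∘ exp`, when `u` is the jet of `u 0`. Indices above `2` repeat the second
derivative. -/
noncomputable def expJet (u : ℕ → ℝ → E) : ℕ → ℝ → E
  | 0, t => u 0 (Real.exp t)
  | 1, t => Real.exp t • u 1 (Real.exp t)
  | _, t => Real.exp t ^ 2 • u 2 (Real.exp t) + Real.exp t • u 1 (Real.exp t)

/-- The `2`-jet of `v 0 ∘ log`, when `v` is the jet of `v 0`. Indices above `2` repeat the second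
derivative. -/
noncomputable def logJet (v : ℕ → ℝ → E) : ℕ → ℝ → E
  | 0, x => v 0 (Real.log x)
  | 1, x => x⁻¹ • v 1 (Real.log x)
  | _, x => (x ^ 2)⁻¹ • (v 2 (Real.log x) - v 1 (Real.log x))

namespace HasJetOn

variable {u : ℕ → ℝ → E} {S T : Set ℝ}

theorem comp_exp (hu : HasJetOn 2 u S) (hT : MapsTo Real.exp T S) : HasJetOn 2 (expJet u) T where
  hasDerivWithinAt i hi t ht := by
    have exp_deriv := (Real.hasDerivAt_exp t).hasDerivWithinAt (s := T)
    have h0 := (hu.hasDerivWithinAt 0 (by norm_num) _ (hT ht)).scomp t exp_deriv hT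
    have h1 := (hu.hasDerivWithinAt 1 (by norm_num) _ (hT ht)).scomp t exp_deriv hT
    interval_cases i
    · exact h0
    · refine (exp_deriv.smul h1).congr_deriv ?_
      simp only [expJet, Function.comp_apply]
      module
  continuousOn_last := by
    have hexp := Real.continuous_exp.continuousOn (s := T)
    have h1 := (hu.continuousOn one_le_two).comp hexp hT
    have h2 := hu.continuousOn_last.comp hexp hT
    exact ((hexp.pow 2).smul h2).add (hexp.smul h1)

theorem comp_log (hu : HasJetOn 2 u S) (hT : MapsTo Real.log T S) (hT0 : T ⊆ Ioi 0) :
    HasJetOn 2 (logJet u) T where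
  hasDerivWithinAt i hi x hx := by
    have hx0 : x ≠ 0 := (hT0 hx).ne'
    have log_deriv := (Real.hasDerivAt_log hx0).hasDerivWithinAt (s := T)
    have h0 := (hu.hasDerivWithinAt 0 (by norm_num) _ (hT hx)).scomp x log_deriv hT
    have h1 := (hu.hasDerivWithinAt 1 (by norm_num) _ (hT hx)).scomp x log_deriv hT
    interval_cases i
    · exact h0
    · refine ((hasDerivAt_inv hx0).hasDerivWithinAt.smul h1).congr_deriv ?_
      simp only [logJet, Function.comp_apply]
      rw [smul_smul, ← sq, inv_pow]
      module
  continuousOn_last := by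
    have hne : ∀ x ∈ T, x ≠ 0 := fun x hx => (hT0 hx).ne'
    have hlog : ContinuousOn Real.log T := Real.continuousOn_log.mono hne
    have h1 := (hu.continuousOn one_le_two).comp hlog hT
    have h2 := hu.continuousOn_last.comp hlog hT
    exact ((continuousOn_id.pow 2).inv₀ fun x hx => pow_ne_zero 2 (hne x hx)).smul (h2.sub h1)

end HasJetOn

end Jets

section TruncatedPowers

variable {ι : Type*} [Fintype ι]

/-- The truncated power sum `∑ c_j (τ_j - θ)₊ⁿ`: a spline of degree `n` with knots `τ_j` that
vanishes to the right of all of them. -/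
noncomputable def truncPowSum (τ c : ι → ℝ) (n : ℕ) (θ : ℝ) : ℝ :=
  ∑ j, c j * max (τ j - θ) 0 ^ n

theorem truncPowSum_eq_zero {τ : ι → ℝ} {θ : ℝ} (hθ : ∀ j, τ j ≤ θ) (c : ι → ℝ) {n : ℕ}
    (hn : n ≠ 0) : truncPowSum τ c n θ = 0 :=
  Finset.sum_eq_zero fun j _ => by
    rw [max_eq_right (sub_nonpos.2 (hθ j)), zero_pow hn, mul_zero]

theorem truncPowSum_of_le {τ : ι → ℝ} {θ : ℝ} (hθ : ∀ j, θ ≤ τ j) (c : ι → ℝ) (n : ℕ) :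
    truncPowSum τ c n θ = ∑ j, c j * (τ j - θ) ^ n :=
  Finset.sum_congr rfl fun j _ => by rw [max_eq_left (sub_nonneg.2 (hθ j))]

theorem continuous_truncPowSum (τ c : ι → ℝ) (n : ℕ) : Continuous (truncPowSum τ c n) := by
  unfold truncPowSum
  fun_prop

theorem hasDerivAt_max_sub_zero_pow (τ : ℝ) (n : ℕ) (θ : ℝ) :
    HasDerivAt (fun θ => max (τ - θ) 0 ^ (n + 2)) (-(n + 2) * max (τ - θ) 0 ^ (n + 1)) θ := by
  refine hasDerivAt_of_hasDerivAt_of_ne' (x := τ)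
    (g := fun θ => -(n + 2) * max (τ - θ) 0 ^ (n + 1)) (fun θ hθ => ?_) (by fun_prop)
    (by fun_prop) θ
  rcases hθ.lt_or_gt with hθ | hθ
  · have left : (fun θ => (τ - θ) ^ (n + 2)) =ᶠ[nhds θ] fun θ => max (τ - θ) 0 ^ (n + 2) := by
      filter_upwards [eventually_lt_nhds hθ] with ξ hξ
      rw [max_eq_left (sub_pos.2 hξ).le]
    refine ((((hasDerivAt_id θ).const_sub τ).pow (n + 2)).congr_of_eventuallyEq
      left.symm).congr_deriv ?_
    rw [max_eq_left (sub_pos.2 hθ).le]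
    push_cast [id]
    ring
  · have right : (fun _ => 0) =ᶠ[nhds θ] fun θ => max (τ - θ) 0 ^ (n + 2) := by
      filter_upwards [eventually_gt_nhds hθ] with ξ hξ
      rw [max_eq_right (sub_neg.2 hξ).le, zero_pow (by lia)]
    refine ((hasDerivAt_const θ (0 : ℝ)).congr_of_eventuallyEq right.symm).congr_deriv ?_
    rw [max_eq_right (sub_neg.2 hθ).le, zero_pow (by lia), mul_zero]

theorem hasDerivAt_truncPowSum (τ c : ι → ℝ) (n : ℕ) (θ : ℝ) :
    HasDerivAt (truncPowSum τ c (n + 2)) (-(n + 2) * truncPowSum τ c (n + 1) θ) θ := by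
  refine (HasDerivAt.fun_sum fun j _ =>
    (hasDerivAt_max_sub_zero_pow (τ j) n θ).const_mul (c j)).congr_deriv ?_
  rw [truncPowSum, Finset.mul_sum]
  exact Finset.sum_congr rfl fun j _ => by ring

theorem hasJetOn_truncPowSum (τ c : ι → ℝ) (n : ℕ) :
    HasJetOn n (fun i θ => (-1) ^ i * (n + 1).descFactorial i * truncPowSum τ c (n + 1 - i) θ)
      univ where
  hasDerivWithinAt i hi θ _ := by
    obtain ⟨m, rfl⟩ := Nat.exists_eq_add_of_lt hi
    have hm : i + m + 1 + 1 - i = m + 2 := by lia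
    have hm' : i + m + 1 + 1 - (i + 1) = m + 1 := by lia
    simp only [Nat.descFactorial_succ, hm, hm']
    refine (((hasDerivAt_truncPowSum τ c m θ).const_mul _).congr_deriv ?_).hasDerivWithinAt
    push_cast
    ring
  continuousOn_last :=
    (continuous_const.mul (continuous_truncPowSum τ c _)).continuousOn

end TruncatedPowers

section Bernstein

theorem eval_bernsteinPolynomial_nonneg (n i : ℕ) {s : ℝ} (hs : s ∈ Icc (0 : ℝ) 1) :
    0 ≤ (bernsteinPolynomial ℝ n i).eval s := by
  have := sub_nonneg.2 hs.2
  have := hs.1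
  simp only [bernsteinPolynomial, Polynomial.eval_mul, Polynomial.eval_pow,
    Polynomial.eval_natCast, Polynomial.eval_X, Polynomial.eval_sub, Polynomial.eval_one]
  positivity

theorem sum_eval_bernsteinPolynomial (n : ℕ) (s : ℝ) :
    ∑ i ∈ Finset.range (n + 1), (bernsteinPolynomial ℝ n i).eval s = 1 := by
  rw [← Polynomial.eval_finsetSum, bernsteinPolynomial.sum, Polynomial.eval_one]

theorem sum_mul_eval_bernsteinPolynomial (n : ℕ) (s : ℝ) :
    ∑ i ∈ Finset.range (n + 1), i * (bernsteinPolynomial ℝ n i).eval s = n * s := by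
  simpa [Polynomial.eval_finsetSum] using
    congr_arg (Polynomial.eval s) (bernsteinPolynomial.sum_smul ℝ n)

theorem abs_sum_mul_eval_bernsteinPolynomial_le {n : ℕ} {p : ℕ → ℝ} {M s : ℝ}
    (hs : s ∈ Icc (0 : ℝ) 1) (hp : ∀ i ≤ n, |p i| ≤ M) :
    |∑ i ∈ Finset.range (n + 1), p i * (bernsteinPolynomial ℝ n i).eval s| ≤ M := by
  calc |∑ i ∈ Finset.range (n + 1), p i * (bernsteinPolynomial ℝ n i).eval s|
      ≤ ∑ i ∈ Finset.range (n + 1), M * (bernsteinPolynomial ℝ n i).eval s := by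
        refine (Finset.abs_sum_le_sum_abs _ _).trans (Finset.sum_le_sum fun i hi => ?_)
        have nonneg := eval_bernsteinPolynomial_nonneg n i hs
        rw [abs_mul, abs_of_nonneg nonneg]
        exact mul_le_mul_of_nonneg_right (hp i (Nat.lt_succ_iff.1 (Finset.mem_range.1 hi))) nonneg
    _ = M := by rw [← Finset.mul_sum, sum_eval_bernsteinPolynomial, mul_one]

theorem affine_pow_eq_sum_bernsteinPolynomial (n : ℕ) (u v s : ℝ) :
    ((1 - s) * u + s * v) ^ n =
      ∑ i ∈ Finset.range (n + 1), u ^ (n - i) * v ^ i * (bernsteinPolynomial ℝ n i).eval s := by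
  rw [add_comm, add_pow]
  refine Finset.sum_congr rfl fun i _ => ?_
  simp only [bernsteinPolynomial, Polynomial.eval_mul, Polynomial.eval_pow,
    Polynomial.eval_natCast, Polynomial.eval_X, Polynomial.eval_sub, Polynomial.eval_one, mul_pow]
  ring

theorem mul_affine_eq_sum_bernsteinPolynomial (n : ℕ) (u v s : ℝ) :
    n * ((1 - s) * u + s * v) =
      ∑ i ∈ Finset.range (n + 1), ((n - i) * u + i * v) * (bernsteinPolynomial ℝ n i).eval s := by
  calc n * ((1 - s) * u + s * v) = n * u * 1 + (v - u) * (n * s) := by ring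
    _ = _ := by
      rw [← sum_eval_bernsteinPolynomial n s, ← sum_mul_eval_bernsteinPolynomial n s,
        Finset.mul_sum, Finset.mul_sum, ← Finset.sum_add_distrib]
      exact Finset.sum_congr rfl fun i _ => by ring

end Bernstein

section ControlBounds

variable {ι κ : Type*} [Fintype ι] [Fintype κ]

theorem max_intCast_sub_zero_eq_affine (τ k : ℤ) {θ : ℝ} (hθ : θ ∈ Icc (k : ℝ) (k + 1)) :
    max (τ - θ) 0 = (1 - (θ - k)) * (max (τ - k) 0 : ℤ) + (θ - k) * (max (τ - k - 1) 0 : ℤ) := by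
  obtain ⟨hkθ, hθk⟩ := hθ
  rcases le_or_gt τ k with hτ | hτ
  · have : (τ : ℝ) ≤ k := mod_cast hτ
    rw [max_eq_right (by linarith), max_eq_right (by lia), max_eq_right (by lia)]
    simp only [Int.cast_zero, mul_zero, add_zero]
  · have : (k : ℝ) + 1 ≤ τ := mod_cast hτ
    rw [max_eq_left (by linarith), max_eq_left (by lia), max_eq_left (by lia)]
    push_cast
    ring

theorem abs_sum_sum_mul_le {y : κ → ℝ} {r : ℝ} (hy : ∀ m, |y m| ≤ r) (K : κ → ι → ℤ)
    (q : ι → ℤ) {M : ℤ} (hM : ∑ m, |∑ j, K m j * q j| ≤ M) (hr : 0 ≤ r) :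
    |∑ j, (∑ m, y m * K m j) * q j| ≤ r * M := by
  calc |∑ j, (∑ m, y m * K m j) * q j| = |∑ m, y m * (∑ j, K m j * q j : ℤ)| := by
        push_cast
        simp only [Finset.sum_mul, Finset.mul_sum, mul_assoc]
        rw [Finset.sum_comm]
    _ ≤ ∑ m, r * |((∑ j, K m j * q j : ℤ) : ℝ)| := by
        refine (Finset.abs_sum_le_sum_abs _ _).trans (Finset.sum_le_sum fun m _ => ?_)
        rw [abs_mul]
        exact mul_le_mul_of_nonneg_right (hy m) (abs_nonneg _)
    _ ≤ r * M := by
        rw [← Finset.mul_sum]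
        exact mul_le_mul_of_nonneg_left (mod_cast hM) hr

theorem abs_sum_sum_mul_bernsteinPolynomial_le {y : κ → ℝ} {r : ℝ} (hr : 0 ≤ r)
    (hy : ∀ m, |y m| ≤ r) {K : κ → ι → ℤ} {n : ℕ} {q : ℕ → ι → ℤ} {M : ℤ}
    (hM : ∀ i ≤ n, ∑ m, |∑ j, K m j * q i j| ≤ M) {s : ℝ} (hs : s ∈ Icc (0 : ℝ) 1) :
    |∑ j, (∑ m, y m * K m j) *
      ∑ i ∈ Finset.range (n + 1), q i j * (bernsteinPolynomial ℝ n i).eval s| ≤ r * M := by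
  simp only [Finset.mul_sum, ← mul_assoc]
  rw [Finset.sum_comm]
  simp only [← Finset.sum_mul]
  exact abs_sum_mul_eval_bernsteinPolynomial_le hs fun i hi =>
    abs_sum_sum_mul_le hy K (q i) (hM i hi) hr

variable {y : κ → ℝ} {r : ℝ} {τ : ι → ℤ} {K : κ → ι → ℤ} {k M : ℤ} {θ : ℝ}

theorem abs_truncPowSum_le (hr : 0 ≤ r) (hy : ∀ m, |y m| ≤ r) (n : ℕ)
    (hM : ∀ i ≤ n,
      ∑ m, |∑ j, K m j * (max (τ j - k) 0 ^ (n - i) * max (τ j - k - 1) 0 ^ i)| ≤ M)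
    (hθ : θ ∈ Icc (k : ℝ) (k + 1)) :
    |truncPowSum (fun j => τ j) (fun j => ∑ m, y m * K m j) n θ| ≤ r * M := by
  have hs : θ - k ∈ Icc (0 : ℝ) 1 := ⟨by linarith [hθ.1], by linarith [hθ.2]⟩
  convert abs_sum_sum_mul_bernsteinPolynomial_le hr hy hM hs using 2
  refine Finset.sum_congr rfl fun j _ => ?_
  rw [max_intCast_sub_zero_eq_affine (τ j) k hθ, affine_pow_eq_sum_bernsteinPolynomial]
  push_cast
  rfl

theorem abs_mul_truncPowSum_two_add_le (hr : 0 ≤ r) (hy : ∀ m, |y m| ≤ r) (a b : ℤ)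
    (hM : ∀ i : ℕ, i ≤ 2 → ∑ m, |∑ j, K m j *
      (a * (max (τ j - k) 0 ^ (2 - i) * max (τ j - k - 1) 0 ^ i) +
        b * ((2 - i) * max (τ j - k) 0 + i * max (τ j - k - 1) 0))| ≤ M)
    (hθ : θ ∈ Icc (k : ℝ) (k + 1)) :
    |a * truncPowSum (fun j => τ j) (fun j => ∑ m, y m * K m j) 2 θ +
      b * (2 * truncPowSum (fun j => τ j) (fun j => ∑ m, y m * K m j) 1 θ)| ≤ r * M := by
  have hs : θ - k ∈ Icc (0 : ℝ) 1 := ⟨by linarith [hθ.1], by linarith [hθ.2]⟩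
  convert abs_sum_sum_mul_bernsteinPolynomial_le hr hy hM hs using 2
  simp only [truncPowSum, Finset.mul_sum (Finset.univ : Finset ι), ← Finset.sum_add_distrib]
  refine Finset.sum_congr rfl fun j _ => ?_
  have square := affine_pow_eq_sum_bernsteinPolynomial 2
    (max (τ j - k) 0 : ℤ) (max (τ j - k - 1) 0 : ℤ) (θ - k)
  have linear := mul_affine_eq_sum_bernsteinPolynomial 2
    (max (τ j - k) 0 : ℤ) (max (τ j - k - 1) 0 : ℤ) (θ - k)
  rw [← max_intCast_sub_zero_eq_affine (τ j) k hθ] at square linear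
  calc _ = (∑ m, y m * K m j) * (a * max (τ j - θ) 0 ^ 2 + b * ((2 : ℕ) * max (τ j - θ) 0)) := by
        push_cast
        ring
    _ = _ := by
        rw [square, linear, Finset.mul_sum (Finset.range _), Finset.mul_sum (Finset.range _),
          ← Finset.sum_add_distrib]
        congr 1
        refine Finset.sum_congr rfl fun i _ => ?_
        push_cast
        ring

end ControlBounds

/-- The knots, in units of `1 / 30`, of the cubic splines that extend a function beyond an endpoint
of its domain and vanish at distance `1`. -/
def cutoffKnot : Fin 5 → ℤ := ![1, 14, 21, 29, 30]

/-- The common denominator of the coefficients of the cutoff splines. -/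
def cutoffDenom : ℤ := 1134000

/-- The coefficients, multiplied by `cutoffDenom`, of the cutoff splines to the right (`σ = 1`) or
to the left (`σ = -1`) of an endpoint. With `s` the distance to the endpoint, row `m` belongs to
the `m`-th of the initial data `h`, `h_s` and `h_ss - σ h_s`; the latter combination is `x² g''`
in the variable `x = exp t`. The numbers come from a linear program minimising the largest ratio
of a control value to its permitted bound. -/
def cutoffWeight (σ : ℤˣ) : Fin 3 → Fin 5 → ℤ :=
  ![![138, 427, -273, -1657, 1589],
    ![1350, -78, -60, 78, -42] + (σ : ℤ) • ![219, 1, 1, -16, 14],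
    ![219, 1, 1, -16, 14]]

-- A truncated power spline has value `∑ c_j τ_j³`, derivative `-90 ∑ c_j τ_j²` and second
-- derivative `5400 ∑ c_j τ_j` at the endpoint, the knots being in units of `1 / 30`. Note that
-- `12600` and `210` are `cutoffDenom / 90` and `cutoffDenom / 5400`.
theorem sum_cutoffWeight_mul_knot_pow_three (σ : ℤˣ) (m : Fin 3) :
    ∑ j, cutoffWeight σ m j * cutoffKnot j ^ 3 = ![cutoffDenom, 0, 0] m := by
  decide +kernel +revert

theorem sum_cutoffWeight_mul_knot_pow_two (σ : ℤˣ) (m : Fin 3) :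
    ∑ j, cutoffWeight σ m j * cutoffKnot j ^ 2 = ![0, -12600, 0] m := by
  decide +kernel +revert

theorem sum_cutoffWeight_mul_knot_pow_one (σ : ℤˣ) (m : Fin 3) :
    ∑ j, cutoffWeight σ m j * cutoffKnot j ^ 1 = ![0, 210 * (σ : ℤ), 210] m := by
  decide +kernel +revert

-- The right-hand sides of the next three inequalities are `cutoffDenom` times `10/9`, `7/3 / 90`
-- and `41/5 / 90`.
theorem sum_abs_cutoffWeight_cubic_le (σ : ℤˣ) : ∀ k : ℕ, k < 30 → ∀ i : ℕ, i ≤ 3 →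
    ∑ m, |∑ j, cutoffWeight σ m j *
      (max (cutoffKnot j - k) 0 ^ (3 - i) * max (cutoffKnot j - k - 1) 0 ^ i)| ≤ 1260000 := by
  decide +kernel +revert

theorem sum_abs_cutoffWeight_quadratic_le (σ : ℤˣ) : ∀ k : ℕ, k < 30 → ∀ i : ℕ, i ≤ 2 →
    ∑ m, |∑ j, cutoffWeight σ m j *
      (max (cutoffKnot j - k) 0 ^ (2 - i) * max (cutoffKnot j - k - 1) 0 ^ i)| ≤ 29400 := by
  decide +kernel +revert

theorem sum_abs_cutoffWeight_mixed_le (σ : ℤˣ) : ∀ k : ℕ, k < 30 → ∀ i : ℕ, i ≤ 2 →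
    ∑ m, |∑ j, cutoffWeight σ m j *
      (σ * (max (cutoffKnot j - k) 0 ^ (2 - i) * max (cutoffKnot j - k - 1) 0 ^ i) +
        30 * ((2 - i) * max (cutoffKnot j - k) 0 +
          i * max (cutoffKnot j - k - 1) 0))| ≤ 103320 := by
  decide +kernel +revert

/-- The coefficients of the cutoff spline with initial data `h = a`, `h' = b`, `h'' - h' = c`. -/
noncomputable def cutoffCoeff (σ : ℤˣ) (a b c : ℝ) (j : Fin 5) : ℝ :=
  ∑ m, (cutoffDenom : ℝ)⁻¹ * ![a, (σ : ℤ) * b, c] m * cutoffWeight σ m j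

/-- The truncated power sum of degree `n` with the knots and coefficients of the cutoff spline. -/
noncomputable def cutoffSum (σ : ℤˣ) (a b c : ℝ) : ℕ → ℝ → ℝ :=
  truncPowSum (fun j => cutoffKnot j) (cutoffCoeff σ a b c)

/-- The jet of the spline with `h = a`, `h' = b`, `h'' - h' = c` at `p` that vanishes at distance
at least `1` from `p` on the right (`σ = 1`) or on the left (`σ = -1`). -/
noncomputable def cutoffJet (σ : ℤˣ) (p a b c : ℝ) (i : ℕ) (t : ℝ) : ℝ :=
  (30 * (σ : ℤ) : ℝ) ^ i *
    ((-1) ^ i * Nat.descFactorial 3 i * cutoffSum σ a b c (3 - i) (30 * (σ : ℤ) * (t - p)))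

section Cutoff

theorem exists_nat_mem_Icc_of_lt {n : ℕ} {θ : ℝ} (hθ : 0 ≤ θ) (hθn : θ < n) :
    ∃ k : ℕ, k < n ∧ θ ∈ Icc ((k : ℤ) : ℝ) ((k : ℤ) + 1) :=
  ⟨⌊θ⌋₊, (Nat.floor_lt hθ).2 hθn, mod_cast Nat.floor_le hθ, mod_cast (Nat.lt_floor_add_one θ).le⟩

theorem intCast_units_sq (σ : ℤˣ) : ((σ : ℤ) : ℝ) ^ 2 = 1 := by
  rw [← sq_abs, abs_unit_intCast, one_pow]

variable (σ : ℤˣ) (p a b c : ℝ)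

theorem hasJetOn_cutoffJet : HasJetOn 2 (cutoffJet σ p a b c) univ :=
  (hasJetOn_truncPowSum (fun j => cutoffKnot j) (cutoffCoeff σ a b c) 2).comp_affine
    (30 * (σ : ℤ)) p (mapsTo_univ _ _)

theorem cutoffJet_zero (t : ℝ) :
    cutoffJet σ p a b c 0 t = cutoffSum σ a b c 3 (30 * (σ : ℤ) * (t - p)) := by
  simp [cutoffJet]

theorem cutoffJet_one (t : ℝ) :
    cutoffJet σ p a b c 1 t = -(90 * (σ : ℤ) * cutoffSum σ a b c 2 (30 * (σ : ℤ) * (t - p))) := by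
  simp only [cutoffJet, Nat.descFactorial]
  push_cast
  ring

theorem cutoffJet_two (t : ℝ) :
    cutoffJet σ p a b c 2 t = 5400 * cutoffSum σ a b c 1 (30 * (σ : ℤ) * (t - p)) := by
  simp only [cutoffJet, Nat.descFactorial, mul_pow, intCast_units_sq]
  push_cast
  ring

theorem cutoffSum_apply_zero (n : ℕ) :
    cutoffSum σ a b c n 0 = (cutoffDenom : ℝ)⁻¹ * ∑ m, ![a, (σ : ℤ) * b, c] m *
      ((∑ j, cutoffWeight σ m j * cutoffKnot j ^ n : ℤ) : ℝ) := by
  have knot_nonneg (j) : (0 : ℝ) ≤ cutoffKnot j := mod_cast (by decide +revert)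
  rw [cutoffSum, truncPowSum_of_le knot_nonneg]
  push_cast
  simp only [cutoffCoeff, sub_zero, Finset.mul_sum, Finset.sum_mul, ← mul_assoc]
  exact Finset.sum_comm

theorem cutoffJet_zero_self : cutoffJet σ p a b c 0 p = a := by
  simp only [cutoffJet_zero, sub_self, mul_zero, cutoffSum_apply_zero,
    sum_cutoffWeight_mul_knot_pow_three, Fin.sum_univ_three, Matrix.cons_val, cutoffDenom]
  push_cast
  ring

theorem cutoffJet_one_self : cutoffJet σ p a b c 1 p = b := by
  simp only [cutoffJet_one, sub_self, mul_zero, cutoffSum_apply_zero,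
    sum_cutoffWeight_mul_knot_pow_two, Fin.sum_univ_three, Matrix.cons_val, cutoffDenom]
  push_cast
  linear_combination b * intCast_units_sq σ

theorem cutoffJet_two_self : cutoffJet σ p a b c 2 p = c + b := by
  simp only [cutoffJet_two, sub_self, mul_zero, cutoffSum_apply_zero,
    sum_cutoffWeight_mul_knot_pow_one, Fin.sum_univ_three, Matrix.cons_val, cutoffDenom]
  push_cast
  linear_combination b * intCast_units_sq σ

theorem cutoffSum_eq_zero {n : ℕ} (hn : n ≠ 0) {θ : ℝ} (hθ : 30 ≤ θ) :
    cutoffSum σ a b c n θ = 0 := by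
  refine truncPowSum_eq_zero (fun j => ?_) _ hn
  have knot_le : cutoffKnot j ≤ 30 := by decide +revert
  exact (mod_cast knot_le : (cutoffKnot j : ℝ) ≤ 30).trans hθ

theorem cutoffJet_eq_zero {i : ℕ} (hi : i ≤ 2) {t : ℝ} (ht : 1 ≤ (σ : ℤ) * (t - p)) :
    cutoffJet σ p a b c i t = 0 := by
  rw [cutoffJet, cutoffSum_eq_zero σ a b c (by lia) (by linarith), mul_zero, mul_zero]

variable {σ p a b c}

theorem abs_cutoffData_le (ha : |a| ≤ 1) (hb : |b| ≤ 1) (hc : |c| ≤ 1) (m : Fin 3) :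
    |(cutoffDenom : ℝ)⁻¹ * ![a, (σ : ℤ) * b, c] m| ≤ 1134000⁻¹ := by
  have abs_data_le_one : |![a, (σ : ℤ) * b, c] m| ≤ 1 := by
    fin_cases m
    · exact ha
    · simpa [abs_mul, abs_unit_intCast] using hb
    · exact hc
  rw [abs_mul, cutoffDenom]
  exact (mul_le_of_le_one_right (abs_nonneg _) abs_data_le_one).trans_eq (by norm_num)

theorem abs_cutoffSum_three_le (ha : |a| ≤ 1) (hb : |b| ≤ 1) (hc : |c| ≤ 1) {θ : ℝ}
    (hθ : 0 ≤ θ) : |cutoffSum σ a b c 3 θ| ≤ 10 / 9 := by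
  rcases le_or_gt 30 θ with h30 | h30
  · norm_num [cutoffSum_eq_zero σ a b c three_ne_zero h30]
  · obtain ⟨k, hk, hθk⟩ := exists_nat_mem_Icc_of_lt (n := 30) hθ (mod_cast h30)
    refine (abs_truncPowSum_le (by norm_num) (abs_cutoffData_le ha hb hc) 3
      (sum_abs_cutoffWeight_cubic_le σ k hk) hθk).trans_eq ?_
    norm_num

theorem abs_cutoffSum_two_le (ha : |a| ≤ 1) (hb : |b| ≤ 1) (hc : |c| ≤ 1) {θ : ℝ}
    (hθ : 0 ≤ θ) : |cutoffSum σ a b c 2 θ| ≤ 7 / 3 / 90 := by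
  rcases le_or_gt 30 θ with h30 | h30
  · norm_num [cutoffSum_eq_zero σ a b c two_ne_zero h30]
  · obtain ⟨k, hk, hθk⟩ := exists_nat_mem_Icc_of_lt (n := 30) hθ (mod_cast h30)
    refine (abs_truncPowSum_le (by norm_num) (abs_cutoffData_le ha hb hc) 2
      (sum_abs_cutoffWeight_quadratic_le σ k hk) hθk).trans_eq ?_
    norm_num

theorem abs_cutoffSum_two_add_le (ha : |a| ≤ 1) (hb : |b| ≤ 1) (hc : |c| ≤ 1) {θ : ℝ}
    (hθ : 0 ≤ θ) :
    |(σ : ℤ) * cutoffSum σ a b c 2 θ + (30 : ℤ) * (2 * cutoffSum σ a b c 1 θ)| ≤ 41 / 5 / 90 := by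
  rcases le_or_gt 30 θ with h30 | h30
  · norm_num [cutoffSum_eq_zero σ a b c two_ne_zero h30,
      cutoffSum_eq_zero σ a b c one_ne_zero h30]
  · obtain ⟨k, hk, hθk⟩ := exists_nat_mem_Icc_of_lt (n := 30) hθ (mod_cast h30)
    refine (abs_mul_truncPowSum_two_add_le (by norm_num) (abs_cutoffData_le ha hb hc) σ 30
      (sum_abs_cutoffWeight_mixed_le σ k hk) hθk).trans_eq ?_
    norm_num

theorem cutoffJet_bounds (ha : |a| ≤ 1) (hb : |b| ≤ 1) (hc : |c| ≤ 1) {t : ℝ}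
    (ht : 0 ≤ (σ : ℤ) * (t - p)) :
    |cutoffJet σ p a b c 0 t| ≤ 10 / 9 ∧ |cutoffJet σ p a b c 1 t| ≤ 7 / 3 ∧
      |cutoffJet σ p a b c 2 t - cutoffJet σ p a b c 1 t| ≤ 41 / 5 := by
  have hθ : 0 ≤ 30 * (σ : ℤ) * (t - p) := by linarith
  refine ⟨?_, ?_, ?_⟩
  · rw [cutoffJet_zero]
    exact abs_cutoffSum_three_le ha hb hc hθ
  · rw [cutoffJet_one, abs_neg, abs_mul, abs_mul, abs_unit_intCast, Nat.abs_ofNat, mul_one]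
    linarith [abs_cutoffSum_two_le (σ := σ) ha hb hc hθ]
  · have factor : cutoffJet σ p a b c 2 t - cutoffJet σ p a b c 1 t =
        90 * ((σ : ℤ) * cutoffSum σ a b c 2 (30 * (σ : ℤ) * (t - p)) +
          (30 : ℤ) * (2 * cutoffSum σ a b c 1 (30 * (σ : ℤ) * (t - p)))) := by
      rw [cutoffJet_one, cutoffJet_two]
      push_cast
      ring
    rw [factor, abs_mul, Nat.abs_ofNat]
    linarith [abs_cutoffSum_two_add_le (σ := σ) ha hb hc hθ]

end Cutoff

section Extension

/-- The extension of the jet `u` on `[A, B]` by cutoff splines with matching data at both ends. -/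
noncomputable def extendJet (A B : ℝ) (u : ℕ → ℝ → ℝ) : ℕ → ℝ → ℝ :=
  glueJet A (cutoffJet (-1) A (u 0 A) (u 1 A) (u 2 A - u 1 A))
    (glueJet B u (cutoffJet 1 B (u 0 B) (u 1 B) (u 2 B - u 1 B)))

theorem cutoffJet_self (σ : ℤˣ) (p : ℝ) (u : ℕ → ℝ → ℝ) {i : ℕ} (hi : i ≤ 2) :
    cutoffJet σ p (u 0 p) (u 1 p) (u 2 p - u 1 p) i p = u i p := by
  interval_cases i
  · exact cutoffJet_zero_self ..
  · exact cutoffJet_one_self ..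
  · rw [cutoffJet_two_self, sub_add_cancel]

variable {A B t : ℝ} {u : ℕ → ℝ → ℝ} {i : ℕ}

theorem extendJet_of_le (ht : t ≤ A) :
    extendJet A B u i t = cutoffJet (-1) A (u 0 A) (u 1 A) (u 2 A - u 1 A) i t :=
  glueJet_of_le ht

theorem extendJet_of_left_le (hAB : A ≤ B) (hi : i ≤ 2) (ht : A ≤ t) :
    extendJet A B u i t =
      glueJet B u (cutoffJet 1 B (u 0 B) (u 1 B) (u 2 B - u 1 B)) i t :=
  glueJet_of_ge ((cutoffJet_self (-1) A u hi).trans (glueJet_of_le hAB).symm) ht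

theorem extendJet_of_mem (hi : i ≤ 2) (ht : t ∈ Icc A B) : extendJet A B u i t = u i t := by
  rw [extendJet_of_left_le (ht.1.trans ht.2) hi ht.1, glueJet_of_le ht.2]

theorem extendJet_of_ge (hAB : A ≤ B) (hi : i ≤ 2) (ht : B ≤ t) :
    extendJet A B u i t = cutoffJet 1 B (u 0 B) (u 1 B) (u 2 B - u 1 B) i t := by
  rw [extendJet_of_left_le hAB hi (hAB.trans ht), glueJet_of_ge (cutoffJet_self 1 B u hi).symm ht]

theorem hasJetOn_extendJet (hAB : A ≤ B) (hu : HasJetOn 2 u (Icc A B)) :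
    HasJetOn 2 (extendJet A B u) univ := by
  have right := hu.glue ((hasJetOn_cutoffJet 1 B _ _ _).mono (subset_univ (Ici B))) isClosed_Icc
    isClosed_Ici Icc_subset_Iic_self subset_rfl fun i hi => (cutoffJet_self 1 B u hi).symm
  rw [Icc_union_Ici_eq_Ici hAB] at right
  rw [← Iic_union_Ici (a := A)]
  exact ((hasJetOn_cutoffJet (-1) A _ _ _).mono (subset_univ _)).glue right isClosed_Iic
    isClosed_Ici subset_rfl subset_rfl fun i hi =>
      (cutoffJet_self (-1) A u hi).trans (glueJet_of_le hAB).symm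

theorem extendJet_eq_zero (hAB : A ≤ B) (hi : i ≤ 2) (ht : t ∉ Icc (A - 1) (B + 1)) :
    extendJet A B u i t = 0 := by
  rcases lt_or_ge t (A - 1) with htA | htA
  · rw [extendJet_of_le (by linarith)]
    exact cutoffJet_eq_zero _ _ _ _ _ hi (by push_cast; linarith)
  · have htB : B + 1 < t := lt_of_not_ge fun htB => ht ⟨htA, htB⟩
    rw [extendJet_of_ge hAB hi (by linarith)]
    exact cutoffJet_eq_zero _ _ _ _ _ hi (by push_cast; linarith)

theorem extendJet_bounds (hAB : A ≤ B) (hu : ∀ t ∈ Icc A B, |u 0 t| ≤ 1 ∧ |u 1 t| ≤ 1 ∧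
    |u 2 t - u 1 t| ≤ 1) (t : ℝ) :
    |extendJet A B u 0 t| ≤ 10 / 9 ∧ |extendJet A B u 1 t| ≤ 7 / 3 ∧
      |extendJet A B u 2 t - extendJet A B u 1 t| ≤ 41 / 5 := by
  rcases le_total t A with htA | htA
  · obtain ⟨h0, h1, h2⟩ := hu A (left_mem_Icc.2 hAB)
    simp only [extendJet_of_le htA]
    exact cutoffJet_bounds h0 h1 h2 (by push_cast; linarith)
  · rcases le_total t B with htB | htB
    · obtain ⟨h0, h1, h2⟩ := hu t ⟨htA, htB⟩
      simp only [extendJet_of_mem zero_le_two ⟨htA, htB⟩, extendJet_of_mem one_le_two ⟨htA, htB⟩,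
        extendJet_of_mem le_rfl ⟨htA, htB⟩]
      exact ⟨h0.trans (by norm_num), h1.trans (by norm_num), h2.trans (by norm_num)⟩
    · obtain ⟨h0, h1, h2⟩ := hu B (right_mem_Icc.2 hAB)
      simp only [extendJet_of_ge hAB zero_le_two htB, extendJet_of_ge hAB one_le_two htB,
        extendJet_of_ge hAB le_rfl htB]
      exact cutoffJet_bounds h0 h1 h2 (by push_cast; linarith)

end Extension

theorem log_mem_Icc_log_iff {a b x : ℝ} (ha : 0 < a) (hb : 0 < b) (hx : 0 < x) :
    Real.log x ∈ Icc (Real.log a) (Real.log b) ↔ x ∈ Icc a b :=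
  and_congr (Real.log_le_log_iff ha hx) (Real.log_le_log_iff hx hb)

theorem expJet_iteratedDerivWithin_bounds {f : ℝ → ℝ} {S : Set ℝ} {x M : ℝ} (hx : 0 < x)
    (hf0 : |f x| ≤ M) (hf1 : x * |derivWithin f S x| ≤ M)
    (hf2 : x ^ 2 * |derivWithin (derivWithin f S) S x| ≤ M) :
    |expJet (fun i => iteratedDerivWithin i f S) 0 (Real.log x)| ≤ M ∧
      |expJet (fun i => iteratedDerivWithin i f S) 1 (Real.log x)| ≤ M ∧
      |expJet (fun i => iteratedDerivWithin i f S) 2 (Real.log x) -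
        expJet (fun i => iteratedDerivWithin i f S) 1 (Real.log x)| ≤ M := by
  simp only [expJet, Real.exp_log hx, iteratedDerivWithin_zero, iteratedDerivWithin_one,
    iteratedDerivWithin_succ (n := 1), add_sub_cancel_right, smul_eq_mul, abs_mul, abs_pow,
    abs_of_pos hx]
  exact ⟨hf0, hf1, hf2⟩

theorem HasJetOn.abs_derivWithin_logJet {v : ℕ → ℝ → ℝ} {T : Set ℝ} {x : ℝ}
    (hv : HasJetOn 2 (logJet v) T) (hT : UniqueDiffOn ℝ T) (hx : x ∈ T) (hx0 : 0 < x) :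
    x * |derivWithin (logJet v 0) T x| = |v 1 (Real.log x)| ∧
      x ^ 2 * |derivWithin (derivWithin (logJet v 0) T) T x| =
        |v 2 (Real.log x) - v 1 (Real.log x)| := by
  rw [← iteratedDerivWithin_one, ← iteratedDerivWithin_succ,
    hv.eqOn_iteratedDerivWithin hT one_le_two hx, hv.eqOn_iteratedDerivWithin hT le_rfl hx]
  simp only [logJet, smul_eq_mul, abs_mul, abs_inv, abs_pow, abs_of_pos hx0]
  exact ⟨mul_inv_cancel_left₀ hx0.ne' _, mul_inv_cancel_left₀ (pow_ne_zero 2 hx0.ne') _⟩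

theorem stmt1_general {α β : ℝ} (hα : 0 < α) (hαβ : α < β) (f : ℝ → ℝ)
    (hf : ContDiffOn ℝ 2 f (Icc α β)) (hf0 : ∀ x ∈ Icc α β, |f x| ≤ 1)
    (hf1 : ∀ x ∈ Icc α β, x * |derivWithin f (Icc α β) x| ≤ 1)
    (hf2 : ∀ x ∈ Icc α β,
      x ^ 2 * |derivWithin (derivWithin f (Icc α β)) (Icc α β) x| ≤ 1) :
    ∃ g : ℝ → ℝ, ContDiffOn ℝ 2 g (Ioi 0) ∧
      (∀ x ∈ Icc α β, g x = f x) ∧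
      (∀ x ∈ Ioi (0 : ℝ), x ∉ Icc (Real.exp (-1) * α) (Real.exp 1 * β) → g x = 0) ∧
      ∀ x ∈ Ioi (0 : ℝ),
        |g x| ≤ 10 / 9 ∧ x * |derivWithin g (Ioi 0) x| ≤ 7 / 3 ∧
        x ^ 2 * |derivWithin (derivWithin g (Ioi 0)) (Ioi 0) x| ≤ 41 / 5 := by
  have hβ : 0 < β := hα.trans hαβ
  have log_le : Real.log α ≤ Real.log β := Real.log_le_log hα hαβ.le
  have exp_mem : MapsTo Real.exp (Icc (Real.log α) (Real.log β)) (Icc α β) := fun t ht =>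
    (log_mem_Icc_log_iff hα hβ t.exp_pos).1 (by rwa [Real.log_exp])
  let u := expJet fun i => iteratedDerivWithin i f (Icc α β)
  let v := extendJet (Real.log α) (Real.log β) u
  have hu : HasJetOn 2 u (Icc (Real.log α) (Real.log β)) :=
    (HasJetOn.of_contDiffOn (uniqueDiffOn_Icc hαβ) hf).comp_exp exp_mem
  have u_bounds (t) (ht : t ∈ Icc (Real.log α) (Real.log β)) :
      |u 0 t| ≤ 1 ∧ |u 1 t| ≤ 1 ∧ |u 2 t - u 1 t| ≤ 1 := by
    have hx := exp_mem ht
    simpa only [Real.log_exp] using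
      expJet_iteratedDerivWithin_bounds t.exp_pos (hf0 _ hx) (hf1 _ hx) (hf2 _ hx)
  have hg : HasJetOn 2 (logJet v) (Ioi 0) :=
    (hasJetOn_extendJet log_le hu).comp_log (mapsTo_univ _ _) subset_rfl
  refine ⟨logJet v 0, hg.contDiffOn (uniqueDiffOn_Ioi 0), fun x hx => ?_, fun x hx0 hx => ?_,
    fun x hx => ?_⟩
  · have hx0 : 0 < x := hα.trans_le hx.1
    simp only [logJet, v, u, extendJet_of_mem zero_le_two ((log_mem_Icc_log_iff hα hβ hx0).2 hx),
      expJet, Real.exp_log hx0, iteratedDerivWithin_zero]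
  · refine extendJet_eq_zero log_le zero_le_two fun hlog => hx ?_
    rw [← log_mem_Icc_log_iff (by positivity) (by positivity) hx0,
      Real.log_mul (Real.exp_ne_zero _) hα.ne', Real.log_mul (Real.exp_ne_zero _) hβ.ne',
      Real.log_exp, Real.log_exp]
    convert hlog using 2 <;> ring
  · have g_deriv := hg.abs_derivWithin_logJet (uniqueDiffOn_Ioi 0) hx hx
    rw [g_deriv.1, g_deriv.2]
    exact extendJet_bounds log_le u_bounds (Real.log x)

theorem stmt1 (N : ℕ) (hN : 2 ≤ N) (f : ℝ → ℝ)
    (hf : ContDiffOn ℝ 2 f (Icc 1 (N:ℝ)))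
    (hf0 : ∀ x ∈ Icc (1:ℝ) (N:ℝ), |f x| ≤ 1)
    (hf1 : ∀ x ∈ Icc (1:ℝ) (N:ℝ), x * |derivWithin f (Icc 1 (N:ℝ)) x| ≤ 1)
    (hf2 : ∀ x ∈ Icc (1:ℝ) (N:ℝ),
      x ^ 2 * |derivWithin (derivWithin f (Icc 1 (N:ℝ))) (Icc 1 (N:ℝ)) x| ≤ 1) :
    ∃ g : ℝ → ℝ, ContDiffOn ℝ 2 g (Ioi 0) ∧
      (∀ x ∈ Icc (1:ℝ) (N:ℝ), g x = f x) ∧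
      (∀ x ∈ Ioi (0:ℝ), x ∉ Icc (Real.exp (-1)) (Real.exp 1 * N) → g x = 0) ∧
      ∀ x ∈ Ioi (0:ℝ),
        |g x| ≤ 10/9 ∧ x * |derivWithin g (Ioi 0) x| ≤ 7/3 ∧
        x ^ 2 * |derivWithin (derivWithin g (Ioi 0)) (Ioi 0) x| ≤ 41/5 := by
  simpa using stmt1_general one_pos (mod_cast hN : (1 : ℝ) < N) f hf hf0 hf1 hf2
end

section
/- (Montgomery–Hilbert inequality) Suppose λ₁, …, λ_N are distinct real numbers and x₁, …, x_N, y₁, …, y_N are complex numbers. Then |Σ_{m≠n} x_m y_n / (λ_m − λ_n)| ≤ (3π/2) (Σ_m |x_m|²/δ_m)^{1/2} (Σ_n |y_n|²/δ_n)^{1/2}, where δ_n = min_{m≠n} |λ_m − λ_n|. -/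
/-!
Substituting `x m / √(δ m)` and `y n / √(δ n)` for the variables turns the inequality into a bound
for the operator norm of the skew-symmetric matrix `A m n = √(δ m) √(δ n) / (λ m - λ n)`. The
partial fraction identity for `1 / ((λ m - λ s) (λ m - λ t))` gives
`Aᵀ A = D A - A D + K + Kᵀ + Q` with `D` and `Q` diagonal and
`K s t = √(δ s) √(δ t) δ t / (λ s - λ t) ^ 2`. As `A` is normal, its norm is attained at an
eigenvector, where the commutator does not contribute: `‖A‖² ≤ 2 ‖K‖ + ‖Q‖`. The nonnegative kernel
`K` satisfies `Kᵀ K ≤ 4 (K + Kᵀ) + 16 / 3` entrywise, so `‖K‖² ≤ 8 ‖K‖ + 16 / 3`.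

The entrywise estimates are sums `∑ m, δ m f (λ m)` with `f` a product of inverse powers of
distances. Such an `f` is convex away from its poles, so `δ m f (λ m)` is at most the integral of
`f` over the interval of length `δ m` centred at `λ m`; these intervals are disjoint, and the
integrals over the complement of the intervals around the poles can be evaluated or bounded
explicitly.
-/

namespace MontgomeryHilbert

open MeasureTheory Set Metric Filter Topology
open scoped Matrix Matrix.Norms.L2Operator ComplexConjugate ComplexInnerProductSpace

section MidpointRule

variable {E : Type*} [NormedAddCommGroup E] [NormedSpace ℝ E] [FiniteDimensional ℝ E]
  [MeasurableSpace E] [BorelSpace E] {μ : Measure E} [μ.IsAddHaarMeasure] {f : E → ℝ}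

lemma measureReal_ball_mul_le_setIntegral {a : E} {r : ℝ}
    (hf : ConvexOn ℝ (ball a r) f) (hint : IntegrableOn f (ball a r) μ) :
    μ.real (ball a r) * f a ≤ ∫ x in ball a r, f x ∂μ := by
  have hmp : MeasurePreserving (fun x => (a + a) - x) μ μ :=
    Measure.measurePreserving_sub_left μ (a + a)
  have hemb : MeasurableEmbedding fun x : E => (a + a) - x :=
    (Homeomorph.subLeft (a + a)).measurableEmbedding
  have hdist : ∀ x, dist (a + a - x) a = dist x a := fun x => by
    rw [dist_eq_norm, dist_eq_norm, ← norm_neg]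
    congr 1
    abel
  have hpre : (fun x => (a + a) - x) ⁻¹' ball a r = ball a r := by
    ext x
    simp only [mem_preimage, mem_ball, hdist]
  have hint' : IntegrableOn (fun x => f (a + a - x)) (ball a r) μ := by
    simpa only [hpre, Function.comp_def] using (hmp.integrableOn_comp_preimage hemb).mpr hint
  have hrefl : ∫ x in ball a r, f (a + a - x) ∂μ = ∫ x in ball a r, f x ∂μ := by
    simpa only [hpre] using hmp.setIntegral_preimage_emb hemb f (ball a r)
  have hmid : ∀ x ∈ ball a r, 2 * f a ≤ f x + f (a + a - x) := fun x hx => by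
    have hx' : a + a - x ∈ ball a r := by rwa [mem_ball, hdist]
    have hcenter : (1 / 2 : ℝ) • x + (1 / 2 : ℝ) • (a + a - x) = a := by module
    have := hf.2 hx hx' one_half_pos.le one_half_pos.le (add_halves 1)
    rw [hcenter, smul_eq_mul, smul_eq_mul] at this
    linarith
  have hle : ∫ _ in ball a r, 2 * f a ∂μ ≤ ∫ x in ball a r, (f x + f (a + a - x)) ∂μ :=
    setIntegral_mono_on (integrableOn_const measure_ball_lt_top.ne) (hint.add hint')
      measurableSet_ball hmid
  rw [setIntegral_const, smul_eq_mul, integral_add hint hint', hrefl] at hle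
  linarith

lemma sum_measureReal_ball_mul_le_setIntegral {ι : Type*} {T : Finset ι} {a : ι → E} {r : ι → ℝ}
    {S : Set E}
    (hdisj : (T : Set ι).PairwiseDisjoint fun t => ball (a t) (r t))
    (hsub : ∀ t ∈ T, ball (a t) (r t) ⊆ S) (hS : MeasurableSet S) (hf₀ : ∀ x ∈ S, 0 ≤ f x)
    (hconv : ∀ t ∈ T, ConvexOn ℝ (ball (a t) (r t)) f) (hint : IntegrableOn f S μ) :
    ∑ t ∈ T, μ.real (ball (a t) (r t)) * f (a t) ≤ ∫ x in S, f x ∂μ :=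
  calc ∑ t ∈ T, μ.real (ball (a t) (r t)) * f (a t)
      ≤ ∑ t ∈ T, ∫ x in ball (a t) (r t), f x ∂μ := Finset.sum_le_sum fun t ht =>
        measureReal_ball_mul_le_setIntegral (hconv t ht) (hint.mono_set (hsub t ht))
    _ = ∫ x in ⋃ t ∈ T, ball (a t) (r t), f x ∂μ :=
        (integral_biUnion_finset T (fun _ _ => measurableSet_ball) hdisj
          fun t ht => hint.mono_set (hsub t ht)).symm
    _ ≤ ∫ x in S, f x ∂μ :=
        setIntegral_mono_set hint ((ae_restrict_iff' hS).mpr (ae_of_all _ hf₀))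
          (iUnion₂_subset hsub).eventuallyLE

end MidpointRule

section Convexity

lemma concaveOn_log_sub {U : Set ℝ} (hU : Convex ℝ U) {a : ℝ} (ha : a ∉ U) :
    ConcaveOn ℝ U fun x => Real.log (x - a) := by
  have hside : U ⊆ Ioi a ∨ U ⊆ Iio a := by
    by_contra! h
    obtain ⟨⟨x, hxU, hx⟩, y, hyU, hy⟩ := And.imp not_subset.mp not_subset.mp h
    exact ha (hU.ordConnected.out hxU hyU ⟨not_lt.mp hx, not_lt.mp hy⟩)
  rcases hside with h | h
  · exact (strictConcaveOn_log_Ioi.concaveOn.translate_left (-a)).subset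
      (fun x hx => by simpa using h hx) hU
  · exact (strictConcaveOn_log_Iio.concaveOn.translate_left (-a)).subset
      (fun x hx => by simpa using h hx) hU

/- The function is the exponential of `-m log |x - a| - n log |x - b|`, and `Real.log (x - a)` is
`log |x - a|` on both sides of `a`. -/
lemma convexOn_inv_abs_sub_pow_mul {U : Set ℝ} (hU : Convex ℝ U) {a b : ℝ} (ha : a ∉ U)
    (hb : b ∉ U) (m n : ℕ) : ConvexOn ℝ U fun x => (|x - a| ^ m * |x - b| ^ n)⁻¹ := by
  have hlog : ConvexOn ℝ U (-(((m : ℝ) • fun x => Real.log (x - a)) +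
      (n : ℝ) • fun x => Real.log (x - b))) :=
    (((concaveOn_log_sub hU ha).smul m.cast_nonneg).add
      ((concaveOn_log_sub hU hb).smul n.cast_nonneg)).neg
  have hexp : ConvexOn ℝ U (Real.exp ∘ _) := ⟨hU, fun x hx y hy p q hp hq hpq =>
    (Real.exp_le_exp.mpr (hlog.2 hx hy hp hq hpq)).trans
      (convexOn_exp.2 trivial trivial hp hq hpq)⟩
  refine hexp.congr fun x hx => ?_
  have hxa : 0 < |x - a| := abs_pos.mpr (sub_ne_zero.mpr fun h => ha (h ▸ hx))
  have hxb : 0 < |x - b| := abs_pos.mpr (sub_ne_zero.mpr fun h => hb (h ▸ hx))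
  simp only [Function.comp_apply, Pi.neg_apply, Pi.add_apply, Pi.smul_apply, smul_eq_mul,
    Real.exp_neg, Real.exp_add, Real.exp_nat_mul, Real.exp_log_eq_abs (abs_pos.mp hxa),
    Real.exp_log_eq_abs (abs_pos.mp hxb)]

end Convexity

section Integrals

variable {a b r r' : ℝ}

lemma setIntegral_compl_ball_inv_abs_sub_pow (a : ℝ) (hr : 0 < r) (n : ℕ) :
    ∫ x in (ball a r)ᶜ, (|x - a| ^ (n + 2))⁻¹ = 2 / ((n + 1) * r ^ (n + 1)) := by
  set g : ℝ → ℝ := (Ici r).indicator fun x => (x ^ (n + 2))⁻¹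
  have hg : ∀ x, (ball a r)ᶜ.indicator (fun x => (|x - a| ^ (n + 2))⁻¹) x = g |x - a| := fun x => by
    simp only [g, indicator, mem_compl_iff, mem_ball, Real.dist_eq, not_lt, mem_Ici]
  have hrpow : ∀ x ∈ Ioi r, (x ^ (n + 2))⁻¹ = x ^ (-(n + 2) : ℝ) := fun x hx => by
    rw [Real.rpow_neg (hr.trans hx).le]
    norm_cast
  calc ∫ x in (ball a r)ᶜ, (|x - a| ^ (n + 2))⁻¹
      = ∫ x, g |x - a| := by
        rw [← integral_indicator measurableSet_ball.compl]
        exact integral_congr_ae (ae_of_all _ hg)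
    _ = 2 * ∫ x in Ioi 0, g x := by
        rw [integral_sub_right_eq_self (fun x => g |x|) a, integral_comp_abs]
    _ = 2 * ∫ x in Ioi r, x ^ (-(n + 2) : ℝ) := by
        rw [setIntegral_indicator measurableSet_Ici,
          inter_eq_right.mpr (Ici_subset_Ioi.mpr hr), integral_Ici_eq_integral_Ioi,
          setIntegral_congr_fun measurableSet_Ioi hrpow]
    _ = 2 / ((n + 1) * r ^ (n + 1)) := by
        rw [integral_Ioi_rpow_of_lt (by linarith [n.cast_nonneg (α := ℝ)]) hr,
          show (-(n + 2) + 1 : ℝ) = -((n + 1 : ℕ) : ℝ) by push_cast; ring, Real.rpow_neg hr.le,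
          Real.rpow_natCast]
        push_cast
        field_simp

lemma integrableOn_compl_ball_inv_abs_sub_pow (a : ℝ) (hr : 0 < r) (n : ℕ) :
    IntegrableOn (fun x => (|x - a| ^ (n + 2))⁻¹) (ball a r)ᶜ :=
  .of_integral_ne_zero <| by
    rw [setIntegral_compl_ball_inv_abs_sub_pow a hr n]
    positivity

lemma hasDerivAt_log_sub_sub_log_sub {x : ℝ} (ha : x ≠ a) (hb : x ≠ b) :
    HasDerivAt (fun x => Real.log (x - b) - Real.log (x - a))
      ((b - a) * ((x - a) * (x - b))⁻¹) x := by
  have hxa : x - a ≠ 0 := sub_ne_zero.mpr ha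
  have hxb : x - b ≠ 0 := sub_ne_zero.mpr hb
  refine ((((hasDerivAt_id x).sub_const b).log hxb).fun_sub
    (((hasDerivAt_id x).sub_const a).log hxa)).congr_deriv ?_
  simp only [id]
  field_simp
  ring

lemma tendsto_log_sub_sub_log_sub_cobounded (a b : ℝ) :
    Tendsto (fun x => Real.log (x - b) - Real.log (x - a)) (Bornology.cobounded ℝ) (𝓝 0) := by
  have hinv : Tendsto (fun x => (x - a)⁻¹) (Bornology.cobounded ℝ) (𝓝 0) :=
    tendsto_inv₀_cobounded.comp (tendsto_sub_const_cobounded a)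
  have hlog : Tendsto (fun x => Real.log (1 - (b - a) * (x - a)⁻¹)) (Bornology.cobounded ℝ)
      (𝓝 0) := by
    simpa using ((hinv.const_mul (b - a)).const_sub 1).log (by simp)
  refine hlog.congr' ?_
  filter_upwards [Bornology.eventually_ne_cobounded a,
    Bornology.eventually_ne_cobounded b] with x hxa hxb
  rw [← sub_ne_zero] at hxa hxb
  rw [← Real.log_div hxb hxa]
  congr 1
  field_simp
  ring

lemma compl_ball_union_ball (hr : 0 < r) (hr' : 0 < r') (hsep : r + r' ≤ b - a) :
    (ball a r ∪ ball b r')ᶜ = Iic (a - r) ∪ (Icc (a + r) (b - r') ∪ Ici (b + r')) := by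
  ext x
  simp only [Real.ball_eq_Ioo, mem_compl_iff, mem_union, mem_Ioo, mem_Iic, mem_Icc, mem_Ici]
  grind

lemma setIntegral_compl_ball_union_ball {F : Type*} [NormedAddCommGroup F] [NormedSpace ℝ F]
    {f : ℝ → F} (hr : 0 < r) (hr' : 0 < r') (hsep : r + r' ≤ b - a)
    (hint : IntegrableOn f (ball a r ∪ ball b r')ᶜ) :
    ∫ x in (ball a r ∪ ball b r')ᶜ, f x = (∫ x in Iic (a - r), f x) +
      ((∫ x in Icc (a + r) (b - r'), f x) + ∫ x in Ici (b + r'), f x) := by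
  have hdisj : Disjoint (Icc (a + r) (b - r')) (Ici (b + r')) :=
    disjoint_left.mpr fun x hx hx' => by linarith [hx.2, mem_Ici.mp hx']
  have hdisj' : Disjoint (Iic (a - r)) (Icc (a + r) (b - r') ∪ Ici (b + r')) :=
    disjoint_left.mpr fun x hx hx' => by
      rcases hx' with hx' | hx' <;> simp only [mem_Iic, mem_Icc, mem_Ici] at hx hx' <;> linarith
  rw [compl_ball_union_ball hr hr' hsep] at hint ⊢
  rw [setIntegral_union hdisj' (measurableSet_Icc.union measurableSet_Ici)
      (integrableOn_union.mp hint).1 (integrableOn_union.mp hint).2,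
    setIntegral_union hdisj measurableSet_Ici (integrableOn_union.mp hint).2.left_of_union
      (integrableOn_union.mp hint).2.right_of_union]

lemma integrableOn_compl_ball_union_ball_inv_mul (hr : 0 < r) (hr' : 0 < r') :
    IntegrableOn (fun x => ((x - a) * (x - b))⁻¹) (ball a r ∪ ball b r')ᶜ := by
  have hdom := ((integrableOn_compl_ball_inv_abs_sub_pow a hr 0).mono_set
      (compl_subset_compl.mpr (subset_union_left (t := ball b r')))).add
    ((integrableOn_compl_ball_inv_abs_sub_pow b hr' 0).mono_set
      (compl_subset_compl.mpr (subset_union_right (s := ball a r))))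
  refine hdom.mono' (by fun_prop) (ae_of_all _ fun x => ?_)
  simp only [Pi.add_apply, zero_add, sq_abs, Real.norm_eq_abs, mul_inv, abs_mul, ← inv_pow]
  nlinarith [sq_nonneg (|(x - a)⁻¹| - |(x - b)⁻¹|), sq_abs (x - a)⁻¹, sq_abs (x - b)⁻¹]

lemma mul_setIntegral_compl_ball_union_ball_inv_mul (hr : 0 < r) (hr' : 0 < r')
    (hsep : r + r' ≤ b - a) :
    (b - a) * ∫ x in (ball a r ∪ ball b r')ᶜ, ((x - a) * (x - b))⁻¹ =
      Real.log ((b - a + r) / (b - a - r)) + Real.log ((b - a + r') / (b - a - r')) := by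
  set L : ℝ → ℝ := fun x => Real.log (x - b) - Real.log (x - a) with hL
  have hint : IntegrableOn (fun x => (b - a) * ((x - a) * (x - b))⁻¹) (ball a r ∪ ball b r')ᶜ :=
    (integrableOn_compl_ball_union_ball_inv_mul hr hr').const_mul (b - a)
  have hderiv : ∀ x ∈ (ball a r ∪ ball b r')ᶜ,
      HasDerivAt L ((b - a) * ((x - a) * (x - b))⁻¹) x := fun x hx =>
    hasDerivAt_log_sub_sub_log_sub (fun h => hx (.inl (h ▸ mem_ball_self hr)))
      (fun h => hx (.inr (h ▸ mem_ball_self hr')))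
  have hlim := tendsto_log_sub_sub_log_sub_cobounded a b
  rw [compl_ball_union_ball hr hr' hsep] at hderiv
  obtain ⟨hintl, hintm, hintr⟩ := And.imp_right integrableOn_union.mp
    (integrableOn_union.mp (compl_ball_union_ball hr hr' hsep ▸ hint))
  have hleft : ∫ x in Iic (a - r), (b - a) * ((x - a) * (x - b))⁻¹ = L (a - r) := by
    rw [integral_Iic_of_hasDerivAt_of_tendsto' (fun x hx => hderiv x (.inl hx)) hintl
      (hlim.mono_left IsOrderBornology.atBot_le_cobounded), sub_zero]
  have hmid : ∫ x in Icc (a + r) (b - r'), (b - a) * ((x - a) * (x - b))⁻¹ =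
      L (b - r') - L (a + r) := by
    have hle : a + r ≤ b - r' := by linarith
    rw [integral_Icc_eq_integral_Ioc, ← intervalIntegral.integral_of_le hle]
    exact intervalIntegral.integral_eq_sub_of_hasDerivAt
      (fun x hx => hderiv x (.inr (.inl (uIcc_of_le hle ▸ hx))))
      ((intervalIntegrable_iff_integrableOn_Icc_of_le hle).mpr hintm)
  have hright : ∫ x in Ici (b + r'), (b - a) * ((x - a) * (x - b))⁻¹ = -L (b + r') := by
    rw [integral_Ici_eq_integral_Ioi, integral_Ioi_of_hasDerivAt_of_tendsto'
      (fun x hx => hderiv x (.inr (.inr hx))) (hintr.mono_set Ioi_subset_Ici_self)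
      (hlim.mono_left IsOrderBornology.atTop_le_cobounded), zero_sub]
  rw [← integral_const_mul, setIntegral_compl_ball_union_ball hr hr' hsep hint,
    hleft, hmid, hright,
    Real.log_div (by linarith) (by linarith), Real.log_div (by linarith) (by linarith)]
  simp only [hL]
  rw [← Real.log_neg_eq_log (a - r - b), ← Real.log_neg_eq_log (a - r - a),
    ← Real.log_neg_eq_log (a + r - b), ← Real.log_neg_eq_log (b - r' - b)]
  ring_nf

lemma setIntegral_compl_ball_union_ball_inv_mul_nonneg (hr : 0 < r) (hr' : 0 < r')
    (hsep : r + r' ≤ |a - b|) : 0 ≤ ∫ x in (ball a r ∪ ball b r')ᶜ, ((x - a) * (x - b))⁻¹ := by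
  wlog hab : a < b generalizing a b r r'
  · rw [union_comm]
    simpa only [mul_comm] using this hr' hr (by rwa [add_comm, abs_sub_comm])
      (lt_of_le_of_ne (not_lt.mp hab) fun h => by simp [h] at hsep; linarith)
  rw [abs_sub_comm, abs_of_pos (sub_pos.mpr hab)] at hsep
  have hlog : ∀ s, 0 < s → s < b - a → 0 ≤ Real.log ((b - a + s) / (b - a - s)) :=
    fun s hs hs' => Real.log_nonneg ((one_le_div (by linarith)).mpr (by linarith))
  refine nonneg_of_mul_nonneg_right ?_ (sub_pos.mpr hab)
  rw [mul_setIntegral_compl_ball_union_ball_inv_mul hr hr' hsep]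
  exact add_nonneg (hlog r hr (by linarith)) (hlog r' hr' (by linarith))

lemma inv_abs_sub_sq_mul_abs_sub_sq {x : ℝ} (hab : a ≠ b) (ha : x ≠ a) (hb : x ≠ b) :
    (|x - a| ^ 2 * |x - b| ^ 2)⁻¹ = ((a - b) ^ 2)⁻¹ *
      ((|x - a| ^ 2)⁻¹ + (|x - b| ^ 2)⁻¹ - 2 * ((x - a) * (x - b))⁻¹) := by
  rw [← sub_ne_zero] at hab ha hb
  simp only [sq_abs]
  field_simp
  ring

lemma integrableOn_compl_ball_union_ball_inv_sq_mul_sq (hr : 0 < r) (hr' : 0 < r') :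
    IntegrableOn (fun x => (|x - a| ^ 2 * |x - b| ^ 2)⁻¹) (ball a r ∪ ball b r')ᶜ := by
  have hdom := ((integrableOn_compl_ball_inv_abs_sub_pow a hr 0).mono_set
    (compl_subset_compl.mpr (subset_union_left (t := ball b r')))).const_mul (r' ^ 2)⁻¹
  refine hdom.mono' (by fun_prop)
    ((ae_restrict_iff' (by measurability)).mpr (ae_of_all _ fun x hx => ?_))
  have hxb : r' ≤ |x - b| := not_lt.mp fun h => hx (.inr h)
  rw [Real.norm_of_nonneg (by positivity), mul_inv, mul_comm]
  gcongr

lemma setIntegral_compl_ball_union_ball_inv_sq_mul_sq_le (hr : 0 < r) (hr' : 0 < r')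
    (hsep : r + r' ≤ |a - b|) :
    ∫ x in (ball a r ∪ ball b r')ᶜ, (|x - a| ^ 2 * |x - b| ^ 2)⁻¹ ≤
      (2 / r + 2 / r') / (a - b) ^ 2 := by
  have hab : a ≠ b := fun h => by
    rw [h, sub_self, abs_zero] at hsep
    linarith
  set S := (ball a r ∪ ball b r')ᶜ
  have hpole : ∀ c s, 0 < s → S ⊆ (ball c s)ᶜ →
      IntegrableOn (fun x => (|x - c| ^ 2)⁻¹) S ∧ ∫ x in S, (|x - c| ^ 2)⁻¹ ≤ 2 / s :=
    fun c s hs hsub => by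
      have hint := integrableOn_compl_ball_inv_abs_sub_pow c hs 0
      refine ⟨hint.mono_set hsub, (setIntegral_mono_set hint
        (ae_of_all _ fun x => by positivity) hsub.eventuallyLE).trans_eq ?_⟩
      simpa using setIntegral_compl_ball_inv_abs_sub_pow c hs 0
  obtain ⟨hintA, hleA⟩ := hpole a r hr (compl_subset_compl.mpr subset_union_left)
  obtain ⟨hintB, hleB⟩ := hpole b r' hr' (compl_subset_compl.mpr subset_union_right)
  have hintC : IntegrableOn (fun x => 2 * ((x - a) * (x - b))⁻¹) S :=
    (integrableOn_compl_ball_union_ball_inv_mul hr hr').const_mul 2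
  have hcross := setIntegral_compl_ball_union_ball_inv_mul_nonneg hr hr' hsep
  have hS : MeasurableSet S := (measurableSet_ball.union measurableSet_ball).compl
  rw [setIntegral_congr_fun hS fun x hx => inv_abs_sub_sq_mul_abs_sub_sq hab
      (fun h => hx (.inl (h ▸ mem_ball_self hr))) fun h => hx (.inr (h ▸ mem_ball_self hr')),
    integral_const_mul, integral_sub (by exact hintA.add hintB) hintC, integral_add hintA hintB,
    integral_const_mul, inv_mul_eq_div]
  gcongr
  linarith

end Integrals

/-- The open intervals of length `δ n > 0` centred at the points `lam n` are pairwise disjoint, as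
they are when `δ n` is the distance from `lam n` to the nearest other point. The inequality of radii
and distances is multiplied by `2` to avoid fractions. -/
structure IsPacking {ι : Type*} (lam δ : ι → ℝ) : Prop where
  pos : ∀ n, 0 < δ n
  add_le : Pairwise fun m n => δ m + δ n ≤ 2 * |lam m - lam n|

section WeightedSums

variable {ι : Type*} {lam δ : ι → ℝ}

lemma isPacking_of_isLeast (hl : Function.Injective lam)
    (hδ : ∀ n, IsLeast {d : ℝ | ∃ m, m ≠ n ∧ d = |lam m - lam n|} (δ n)) : IsPacking lam δ where
  pos n := by
    obtain ⟨m, hm, hd⟩ := (hδ n).1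
    exact hd ▸ abs_pos.mpr (sub_ne_zero.mpr (hl.ne hm))
  add_le m n hmn := by
    have hm := (hδ m).2 ⟨n, hmn.symm, rfl⟩
    have hn := (hδ n).2 ⟨m, hmn, rfl⟩
    rw [abs_sub_comm] at hm
    linarith

namespace IsPacking

lemma half_add_half_le (h : IsPacking lam δ) {m n : ι} (hmn : m ≠ n) :
    δ m / 2 + δ n / 2 ≤ |lam m - lam n| := by
  linarith [h.add_le hmn]

lemma injective (h : IsPacking lam δ) : Function.Injective lam := fun m n hmn => by
  by_contra hne
  have hle := h.half_add_half_le hne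
  rw [hmn, sub_self, abs_zero] at hle
  linarith [h.pos m, h.pos n]

lemma disjoint_ball (h : IsPacking lam δ) {m n : ι} (hmn : m ≠ n) :
    Disjoint (ball (lam m) (δ m / 2)) (ball (lam n) (δ n / 2)) :=
  ball_disjoint_ball (h.half_add_half_le hmn)

lemma sum_mul_le_setIntegral [Fintype ι] (h : IsPacking lam δ) (P : Finset ι)
    {f : ℝ → ℝ} (hf₀ : ∀ x, 0 ≤ f x) (hfP : ∀ s ∈ P, f (lam s) = 0)
    (hconv : ∀ U, Convex ℝ U → (∀ s ∈ P, lam s ∉ U) → ConvexOn ℝ U f)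
    (hint : IntegrableOn f (⋃ s ∈ P, ball (lam s) (δ s / 2))ᶜ) :
    ∑ t, δ t * f (lam t) ≤ ∫ x in (⋃ s ∈ P, ball (lam s) (δ s / 2))ᶜ, f x := by
  classical
  have hdisj : ∀ t ∈ Pᶜ, ∀ s ∈ P, Disjoint (ball (lam t) (δ t / 2)) (ball (lam s) (δ s / 2)) :=
    fun t ht s hs => h.disjoint_ball fun hts => Finset.mem_compl.mp ht (hts ▸ hs)
  have hsum : ∑ t, δ t * f (lam t) =
      ∑ t ∈ Pᶜ, volume.real (ball (lam t) (δ t / 2)) * f (lam t) := by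
    refine (Finset.sum_subset_zero_on_sdiff (Finset.subset_univ _) (fun s hs => ?_)
      fun t _ => ?_).symm
    · simp only [Finset.mem_sdiff, Finset.mem_compl, not_not] at hs
      rw [hfP s hs.2, mul_zero]
    · rw [Real.volume_real_ball (half_pos (h.pos t)).le, mul_div_cancel₀ _ two_ne_zero]
  rw [hsum]
  refine sum_measureReal_ball_mul_le_setIntegral (fun t _ t' _ htt' => h.disjoint_ball htt')
    (fun t ht => subset_compl_iff_disjoint_right.mpr (disjoint_iUnion₂_right.mpr (hdisj t ht)))
    (by measurability) (fun x _ => hf₀ x) (fun t ht => hconv _ (convex_ball _ _) fun s hs => ?_)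
    hint
  exact fun hst => (hdisj t ht s hs).le_bot ⟨hst, mem_ball_self (half_pos (h.pos s))⟩

/- The term `t = s` is a division by zero, hence `0`; likewise in the next lemma. -/
lemma sum_div_abs_sub_pow_le [Fintype ι] (h : IsPacking lam δ) (s : ι) (n : ℕ) :
    ∑ t, δ t / |lam t - lam s| ^ (n + 2) ≤ 2 / ((n + 1) * (δ s / 2) ^ (n + 1)) := by
  classical
  have hs := half_pos (h.pos s)
  have hle := h.sum_mul_le_setIntegral {s} (f := fun x => (|x - lam s| ^ (n + 2))⁻¹)
    (fun x => by positivity) (by simp)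
    (fun U hU hsU => by
      simpa using convexOn_inv_abs_sub_pow_mul hU (by simpa using hsU) (by simpa using hsU)
        (n + 2) 0)
    (by simpa using integrableOn_compl_ball_inv_abs_sub_pow (lam s) hs n)
  simp only [Finset.mem_singleton, iUnion_iUnion_eq_left,
    setIntegral_compl_ball_inv_abs_sub_pow (lam s) hs n] at hle
  exact hle

lemma sum_div_sq_mul_sq_le [Fintype ι] (h : IsPacking lam δ) {s t : ι} (hst : s ≠ t) :
    ∑ m, δ m / (|lam m - lam s| ^ 2 * |lam m - lam t| ^ 2) ≤
      (4 / δ s + 4 / δ t) / (lam s - lam t) ^ 2 := by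
  classical
  have hs := half_pos (h.pos s)
  have ht := half_pos (h.pos t)
  have hunion : ⋃ n ∈ ({s, t} : Finset ι), ball (lam n) (δ n / 2) =
      ball (lam s) (δ s / 2) ∪ ball (lam t) (δ t / 2) := by
    simp [iUnion_or, iUnion_union_distrib]
  have hle := h.sum_mul_le_setIntegral {s, t}
    (f := fun x => (|x - lam s| ^ 2 * |x - lam t| ^ 2)⁻¹) (fun x => by positivity) (by simp)
    (fun U hU hU' => convexOn_inv_abs_sub_pow_mul hU (hU' s (by simp)) (hU' t (by simp)) 2 2)
    (hunion ▸ integrableOn_compl_ball_union_ball_inv_sq_mul_sq hs ht)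
  rw [hunion] at hle
  refine hle.trans ((setIntegral_compl_ball_union_ball_inv_sq_mul_sq_le hs ht
    (h.half_add_half_le hst)).trans_eq ?_)
  field_simp
  ring

lemma mul_sum_div_abs_sub_sq_mem_Icc [Fintype ι] (h : IsPacking lam δ) (s : ι) :
    δ s * ∑ m, δ m / |lam m - lam s| ^ 2 ∈ Icc 0 4 := by
  have hs := h.pos s
  refine ⟨mul_nonneg hs.le (Finset.sum_nonneg fun m _ => div_nonneg (h.pos m).le (sq_nonneg _)), ?_⟩
  grw [h.sum_div_abs_sub_pow_le s 0]
  apply le_of_eq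
  field_simp
  norm_num
  ring

end IsPacking

end WeightedSums

section NormalOperators

variable {H : Type*} [NormedAddCommGroup H] [InnerProductSpace ℂ H] [CompleteSpace H]

lemma star_apply_eq_smul_of_apply_eq_smul {T : H →L[ℂ] H} (hT : IsStarNormal T) {k : ℂ} {v : H}
    (hv : T v = k • v) : star T v = conj k • v := by
  have hnormal : IsStarNormal (T - k • 1) := ⟨by
    rw [star_sub, star_smul, star_one]
    exact ((hT.star_comm_self.sub_left ((Commute.one_left T).smul_left _)).sub_right
      ((Commute.one_right _).smul_right k))⟩
  have hker : star (T - k • 1) v = 0 :=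
    (ContinuousLinearMap.IsStarNormal.adjoint_apply_eq_zero_iff hnormal v).mpr (by simp [hv])
  rw [star_sub, star_smul, star_one] at hker
  simpa [sub_eq_zero] using hker

lemma exists_eigenvector_norm_eq [Nontrivial H] {T : H →L[ℂ] H} (hc : IsCompactOperator T)
    (hT : IsStarNormal T) (h₀ : T ≠ 0) : ∃ (k : ℂ) (v : H), v ≠ 0 ∧ ‖k‖ = ‖T‖ ∧ T v = k • v := by
  obtain ⟨k, hk, hkr⟩ := spectrum.exists_nnnorm_eq_spectralRadius T
  have hnorm : ‖k‖ = ‖T‖ := by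
    rw [IsStarNormal.spectralRadius_eq_nnnorm T] at hkr
    exact congrArg NNReal.toReal (ENNReal.coe_injective hkr)
  have hk₀ : k ≠ 0 := norm_ne_zero_iff.mp (hnorm ▸ norm_ne_zero_iff.mpr h₀)
  obtain ⟨v, hv⟩ := ((hc.hasEigenvalue_iff_mem_spectrum hk₀).mpr hk).exists_hasEigenvector
  exact ⟨k, v, hv.2, hnorm, hv.apply_eq_smul⟩

/- At an eigenvector `v` of the normal operator `T`, `⟪v, (T * D - D * T) v⟫ = 0`. -/
lemma norm_sq_le_norm_star_mul_self_add_commutator {T : H →L[ℂ] H} (hc : IsCompactOperator T)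
    (hT : IsStarNormal T) (D : H →L[ℂ] H) : ‖T‖ ^ 2 ≤ ‖star T * T + (T * D - D * T)‖ := by
  rcases eq_or_ne T 0 with rfl | h₀
  · simp
  have : Nontrivial H := by
    by_contra h
    rw [not_nontrivial_iff_subsingleton] at h
    exact h₀ (Subsingleton.elim _ _)
  obtain ⟨k, v, hv₀, hk, hv⟩ := exists_eigenvector_norm_eq hc hT h₀
  set W := star T * T + (T * D - D * T) with hW
  have hstar := star_apply_eq_smul_of_apply_eq_smul hT hv
  have hTD : ⟪v, T (D v)⟫ = k * ⟪v, D v⟫ := by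
    rw [← ContinuousLinearMap.adjoint_inner_left, ← ContinuousLinearMap.star_eq_adjoint, hstar,
      inner_smul_left, Complex.conj_conj]
  have hinner : ⟪v, W v⟫ = (‖T‖ ^ 2 * ‖v‖ ^ 2 : ℝ) := by
    rw [hW, add_apply, sub_apply, mul_apply_eq_comp, mul_apply_eq_comp, mul_apply_eq_comp,
      inner_add_right, inner_sub_right, hTD, hv, map_smul, map_smul, hstar, inner_smul_right,
      inner_smul_right, inner_smul_right, sub_self, add_zero, ← mul_assoc, Complex.mul_conj',
      hk, inner_self_eq_norm_sq_to_K]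
    push_cast
    rfl
  have hle := norm_inner_le_norm (𝕜 := ℂ) v (W v)
  rw [hinner, Complex.norm_of_nonneg (by positivity)] at hle
  refine le_of_mul_le_mul_right (hle.trans ?_) (pow_pos (norm_pos_iff.mpr hv₀) 2)
  calc ‖v‖ * ‖W v‖ ≤ ‖v‖ * (‖W‖ * ‖v‖) := by grw [W.le_opNorm v]
    _ = ‖W‖ * ‖v‖ ^ 2 := by ring

end NormalOperators

section Matrices

variable {m n 𝕜 : Type*} [Fintype m] [Fintype n] [DecidableEq n] [RCLike 𝕜]

lemma l2_opNorm_le_of_norm_apply_le {A : Matrix m n 𝕜} {B : Matrix m n ℝ}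
    (h : ∀ i j, ‖A i j‖ ≤ B i j) : ‖A‖ ≤ ‖B‖ := by
  rw [Matrix.l2_opNorm_def]
  refine ContinuousLinearMap.opNorm_le_bound _ (norm_nonneg _) fun x => ?_
  let x' : EuclideanSpace ℝ n := WithLp.toLp 2 fun j => ‖x j‖
  have hx' : ‖x'‖ = ‖x‖ := by simp [x', EuclideanSpace.norm_eq]
  rw [← hx']
  refine le_trans ?_ (Matrix.l2_opNorm_mulVec B x')
  simp only [EuclideanSpace.norm_eq]
  gcongr with i
  calc ‖(A *ᵥ x) i‖ ≤ ∑ j, ‖A i j * x j‖ := norm_sum_le _ _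
    _ ≤ ∑ j, B i j * ‖x j‖ := Finset.sum_le_sum fun j _ => by
        grw [norm_mul, h i j]
    _ ≤ ‖(B *ᵥ x') i‖ := Real.le_norm_self _

lemma l2_opNorm_transpose [DecidableEq m] [TrivialStar 𝕜] (A : Matrix m n 𝕜) : ‖Aᵀ‖ = ‖A‖ := by
  rw [← Matrix.conjTranspose_eq_transpose_of_trivial, Matrix.l2_opNorm_conjTranspose]

lemma norm_dotProduct_mulVec_le (A : Matrix m n 𝕜) (x : m → 𝕜) (y : n → 𝕜) :
    ‖x ⬝ᵥ A *ᵥ y‖ ≤ ‖A‖ * √(∑ i, ‖x i‖ ^ 2) * √(∑ j, ‖y j‖ ^ 2) := by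
  have hA := Matrix.l2_opNorm_mulVec A (WithLp.toLp 2 y)
  simp only [EuclideanSpace.norm_eq] at hA
  calc ‖x ⬝ᵥ A *ᵥ y‖ ≤ ∑ i, ‖x i‖ * ‖(A *ᵥ y) i‖ := by
        simpa only [norm_mul, dotProduct] using norm_sum_le Finset.univ fun i => x i * (A *ᵥ y) i
    _ ≤ √(∑ i, ‖x i‖ ^ 2) * √(∑ i, ‖(A *ᵥ y) i‖ ^ 2) := Real.sum_mul_le_sqrt_mul_sqrt _ _ _
    _ ≤ √(∑ i, ‖x i‖ ^ 2) * (‖A‖ * √(∑ j, ‖y j‖ ^ 2)) := by gcongr; exact hA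
    _ = ‖A‖ * √(∑ i, ‖x i‖ ^ 2) * √(∑ j, ‖y j‖ ^ 2) := by ring

lemma l2_opNorm_sq_le_of_isStarNormal {A : Matrix n n ℂ} (hA : IsStarNormal A)
    (D : Matrix n n ℂ) : ‖A‖ ^ 2 ≤ ‖Aᴴ * A + (A * D - D * A)‖ := by
  set φ := Matrix.toEuclideanCLM (n := n) (𝕜 := ℂ)
  have hid : IsCompactOperator (id : EuclideanSpace ℂ n → EuclideanSpace ℂ n) :=
    (isCompactOperator_id_iff_finiteDimensional (𝕜 := ℂ)).mpr inferInstance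
  have hle := norm_sq_le_norm_star_mul_self_add_commutator (T := φ A)
    (by simpa only [Function.id_comp] using hid.comp_clm (φ A)) (hA.map φ) (φ D)
  rwa [← map_star, ← map_mul, ← map_mul, ← map_mul, ← map_sub, ← map_add] at hle

lemma l2_opNorm_map_ofReal_sq_le {A D P : Matrix n n ℝ} (hA : IsStarNormal A)
    (hgram : Aᴴ * A = D * A - A * D + P) (hP : ∀ i j, 0 ≤ P i j) :
    ‖A.map ((↑) : ℝ → ℂ)‖ ^ 2 ≤ ‖P‖ := by
  set φ := Complex.ofRealHom.mapMatrix (m := n)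
  have hstar : (φ A)ᴴ = φ Aᴴ := by
    ext i j
    exact Complex.conj_ofReal _
  have hnormal : IsStarNormal (φ A) := ⟨by
    rw [Matrix.star_eq_conjTranspose, hstar]
    exact hA.star_comm_self.map φ⟩
  have hcomm : (φ A)ᴴ * φ A + (φ A * φ D - φ D * φ A) = φ P := by
    rw [hstar, ← map_mul, hgram]
    simp only [map_add, map_sub, map_mul]
    abel
  calc ‖φ A‖ ^ 2 ≤ ‖φ P‖ := hcomm ▸ l2_opNorm_sq_le_of_isStarNormal hnormal (φ D)
    _ ≤ ‖P‖ := l2_opNorm_le_of_norm_apply_le fun i j =>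
        (Complex.norm_of_nonneg (hP i j)).le

end Matrices

section Kernels

variable {ι : Type*} {lam δ : ι → ℝ}

/-- The matrix of the bilinear form in the variables `x m / √(δ m)`, `y n / √(δ n)`. Its diagonal
vanishes because `1 / 0 = 0`. -/
noncomputable def hilbertMatrix (lam δ : ι → ℝ) : Matrix ι ι ℝ :=
  .of fun m n => √(δ m) * √(δ n) / (lam m - lam n)

/-- The kernel `K` for which the Gram matrix of `hilbertMatrix lam δ` is `K + Kᵀ` plus a commutator
and a diagonal matrix. Its diagonal vanishes because `1 / 0 = 0`. -/
noncomputable def squareKernel (lam δ : ι → ℝ) : Matrix ι ι ℝ :=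
  .of fun m n => √(δ m) * √(δ n) * δ n / |lam m - lam n| ^ 2

lemma transpose_hilbertMatrix (lam δ : ι → ℝ) :
    (hilbertMatrix lam δ)ᵀ = -hilbertMatrix lam δ := by
  ext m n
  simp only [hilbertMatrix, Matrix.transpose_apply, Matrix.neg_apply, Matrix.of_apply]
  rw [← div_neg, neg_sub, mul_comm]

namespace IsPacking

lemma squareKernel_nonneg (h : IsPacking lam δ) (s t : ι) : 0 ≤ squareKernel lam δ s t := by
  have := (h.pos t).le
  simp only [squareKernel, Matrix.of_apply]
  positivity

variable [DecidableEq ι]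

lemma hilbertMatrix_apply_mul_apply (h : IsPacking lam δ) {s t : ι} (hst : s ≠ t) (m : ι) :
    hilbertMatrix lam δ m s * hilbertMatrix lam δ m t =
      hilbertMatrix lam δ s t * (δ m / (lam m - lam s) - δ m / (lam m - lam t)) +
      ((if m = s then squareKernel lam δ t s else 0) +
        if m = t then squareKernel lam δ s t else 0) := by
  have hsub : ∀ {i j : ι}, i ≠ j → lam i - lam j ≠ 0 := fun hij =>
    sub_ne_zero.mpr (h.injective.ne hij)
  have hst' := hsub hst
  have hts' := hsub hst.symm
  have hδ := Real.sq_sqrt (h.pos m).le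
  simp only [hilbertMatrix, squareKernel, Matrix.of_apply, sq_abs]
  rcases eq_or_ne m s with rfl | hms
  · rw [if_pos rfl, if_neg hst, sub_self]
    field_simp
    ring
  rcases eq_or_ne m t with rfl | hmt
  · rw [if_pos rfl, if_neg hms, sub_self]
    field_simp
    ring
  · have hms' := hsub hms
    have hmt' := hsub hmt
    rw [if_neg hms, if_neg hmt]
    field_simp
    rw [hδ]
    ring

variable [Fintype ι]

lemma transpose_hilbertMatrix_mul_self (h : IsPacking lam δ) :
    (hilbertMatrix lam δ)ᵀ * hilbertMatrix lam δ =
      Matrix.diagonal (fun s => ∑ m, δ m / (lam m - lam s)) * hilbertMatrix lam δ -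
        hilbertMatrix lam δ * Matrix.diagonal (fun s => ∑ m, δ m / (lam m - lam s)) +
      (squareKernel lam δ + (squareKernel lam δ)ᵀ +
        Matrix.diagonal fun s => δ s * ∑ m, δ m / |lam m - lam s| ^ 2) := by
  ext s t
  rw [Matrix.mul_apply]
  simp only [Matrix.transpose_apply, Matrix.add_apply, Matrix.sub_apply, Matrix.diagonal_mul,
    Matrix.mul_diagonal]
  rcases eq_or_ne s t with rfl | hst
  · have hterm : ∀ m, hilbertMatrix lam δ m s * hilbertMatrix lam δ m s =
        δ s * (δ m / |lam m - lam s| ^ 2) := fun m => by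
      rw [hilbertMatrix, Matrix.of_apply, div_mul_div_comm, mul_mul_mul_comm,
        Real.mul_self_sqrt (h.pos m).le, Real.mul_self_sqrt (h.pos s).le, sq_abs, ← pow_two]
      ring
    have hdiag : squareKernel lam δ s s = 0 := by simp [squareKernel]
    simp only [hterm, ← Finset.mul_sum, hdiag, Matrix.diagonal_apply_eq]
    ring
  · simp only [h.hilbertMatrix_apply_mul_apply hst, Finset.sum_add_distrib, ← Finset.mul_sum,
      Finset.sum_sub_distrib, Finset.sum_ite_eq', Finset.mem_univ, if_true,
      Matrix.diagonal_apply_ne _ hst]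
    ring

lemma transpose_squareKernel_mul_self_apply_le (h : IsPacking lam δ) (s t : ι) :
    ((squareKernel lam δ)ᵀ * squareKernel lam δ) s t ≤
      (4 • (squareKernel lam δ + (squareKernel lam δ)ᵀ) +
        Matrix.diagonal fun _ => 16 / 3 : Matrix ι ι ℝ) s t := by
  have hs := h.pos s
  have ht := h.pos t
  have hterm : ∀ m, squareKernel lam δ m s * squareKernel lam δ m t =
      √(δ s) * √(δ t) * δ s * δ t * (δ m / (|lam m - lam s| ^ 2 * |lam m - lam t| ^ 2)) :=
    fun m => by
      simp only [squareKernel, Matrix.of_apply]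
      rw [div_mul_div_comm, ← mul_div_assoc]
      congr 1
      linear_combination √(δ s) * √(δ t) * δ s * δ t * Real.mul_self_sqrt (h.pos m).le
  simp only [Matrix.mul_apply, Matrix.transpose_apply, Matrix.add_apply, Matrix.smul_apply, hterm,
    ← Finset.mul_sum]
  rcases eq_or_ne s t with rfl | hst
  · have hsum := h.sum_div_abs_sub_pow_le s 2
    have hdiag : squareKernel lam δ s s = 0 := by simp [squareKernel]
    rw [hdiag, Matrix.diagonal_apply_eq, Real.mul_self_sqrt hs.le]
    simp only [← pow_add]
    grw [hsum]
    apply le_of_eq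
    field_simp
    ring
  · grw [h.sum_div_sq_mul_sq_le hst, Matrix.diagonal_apply_ne _ hst]
    rw [squareKernel, Matrix.of_apply, Matrix.of_apply, abs_sub_comm (lam t), sq_abs]
    apply le_of_eq
    have := sub_ne_zero.mpr (h.injective.ne hst)
    simp only [nsmul_eq_mul]
    field_simp
    norm_num
    ring

lemma norm_squareKernel_le (h : IsPacking lam δ) : ‖squareKernel lam δ‖ ≤ 4 + 8 / √3 := by
  set K := squareKernel lam δ
  have hsq : ‖K‖ * ‖K‖ ≤ 8 * ‖K‖ + 16 / 3 :=
    calc ‖K‖ * ‖K‖ = ‖Kᵀ * K‖ := by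
          rw [← Matrix.l2_opNorm_conjTranspose_mul_self,
            Matrix.conjTranspose_eq_transpose_of_trivial]
      _ ≤ ‖4 • (K + Kᵀ) + Matrix.diagonal fun _ => 16 / 3‖ :=
          l2_opNorm_le_of_norm_apply_le fun s t => by
            rw [Real.norm_of_nonneg]
            · exact h.transpose_squareKernel_mul_self_apply_le s t
            · exact Finset.sum_nonneg fun m _ =>
                mul_nonneg (h.squareKernel_nonneg m s) (h.squareKernel_nonneg m t)
      _ ≤ 4 * (‖K‖ + ‖Kᵀ‖) + 16 / 3 := by
          grw [norm_add_le, norm_nsmul_le, norm_add_le, Matrix.l2_opNorm_diagonal,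
            pi_norm_const_le]
          norm_num
      _ = 8 * ‖K‖ + 16 / 3 := by
          rw [l2_opNorm_transpose]
          ring
  have hsq' : (‖K‖ - 4) ^ 2 ≤ (8 / √3) ^ 2 := by
    rw [div_pow, Real.sq_sqrt (by norm_num)]
    linarith
  linarith [abs_le_of_sq_le_sq' hsq' (by positivity)]

lemma norm_hilbertMatrix_le (h : IsPacking lam δ) :
    ‖(hilbertMatrix lam δ).map ((↑) : ℝ → ℂ)‖ ≤ √(12 + 16 / √3) := by
  set K := squareKernel lam δ
  have hA := transpose_hilbertMatrix lam δ
  have hgram := h.transpose_hilbertMatrix_mul_self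
  rw [← Matrix.conjTranspose_eq_transpose_of_trivial] at hA hgram
  have hnormal : IsStarNormal (hilbertMatrix lam δ) := ⟨by
    rw [Matrix.star_eq_conjTranspose, hA]
    exact (Commute.refl _).neg_left⟩
  refine Real.le_sqrt_of_sq_le ((l2_opNorm_map_ofReal_sq_le hnormal hgram fun s t => ?_).trans ?_)
  · have hdiag : 0 ≤ Matrix.diagonal (fun s => δ s * ∑ m, δ m / |lam m - lam s| ^ 2) s t := by
      rw [Matrix.diagonal_apply]
      split_ifs
      exacts [(h.mul_sum_div_abs_sub_sq_mem_Icc s).1, le_rfl]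
    exact add_nonneg (add_nonneg (h.squareKernel_nonneg s t) (h.squareKernel_nonneg t s)) hdiag
  · have hnorm : ‖fun s => δ s * ∑ m, δ m / |lam m - lam s| ^ 2‖ ≤ 4 :=
      (pi_norm_le_iff_of_nonneg (by norm_num)).mpr fun s => by
        rw [Real.norm_of_nonneg (h.mul_sum_div_abs_sub_sq_mem_Icc s).1]
        exact (h.mul_sum_div_abs_sub_sq_mem_Icc s).2
    grw [norm_add_le, norm_add_le, l2_opNorm_transpose, Matrix.l2_opNorm_diagonal, hnorm,
      h.norm_squareKernel_le]
    apply le_of_eq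
    ring

lemma sum_div_sub_eq_dotProduct_mulVec (h : IsPacking lam δ) (x y : ι → ℂ) :
    (∑ m, ∑ n, if m ≠ n then x m * y n / ((lam m - lam n : ℝ) : ℂ) else 0) =
      (fun m => x m / √(δ m)) ⬝ᵥ
        ((hilbertMatrix lam δ).map ((↑) : ℝ → ℂ) *ᵥ fun n => y n / √(δ n)) := by
  have hsqrt : ∀ n, (√(δ n) : ℂ) ≠ 0 := fun n =>
    Complex.ofReal_ne_zero.mpr (Real.sqrt_pos.mpr (h.pos n)).ne'
  simp only [dotProduct, Matrix.mulVec, Finset.mul_sum, Matrix.map_apply, hilbertMatrix,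
    Matrix.of_apply]
  refine Finset.sum_congr rfl fun m _ => Finset.sum_congr rfl fun n _ => ?_
  have hm := hsqrt m
  have hn := hsqrt n
  split_ifs with hmn
  · push_cast
    field_simp
  · simp [not_not.mp hmn]

end IsPacking

end Kernels

lemma sqrt_twelve_add_le : √(12 + 16 / √3) ≤ 3 * Real.pi / 2 := by
  have h3 : 16 / √3 ≤ 10 := by
    rw [div_le_iff₀ (by positivity)]
    nlinarith [Real.le_sqrt' (x := 1.6) (y := 3) (by norm_num) |>.mpr (by norm_num)]
  refine Real.sqrt_le_iff.mpr ⟨by positivity, ?_⟩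
  nlinarith [Real.pi_gt_d2]

end MontgomeryHilbert

open MontgomeryHilbert

theorem stmt6_general {ι : Type*} [Fintype ι] [DecidableEq ι] {lam δ : ι → ℝ}
    (h : IsPacking lam δ) (x y : ι → ℂ) :
    ‖∑ m, ∑ n, if m ≠ n then x m * y n / ((lam m - lam n : ℝ) : ℂ) else 0‖ ≤
      √(12 + 16 / √3) * √(∑ m, ‖x m‖ ^ 2 / δ m) * √(∑ n, ‖y n‖ ^ 2 / δ n) := by
  have hnorm : ∀ (z : ι → ℂ) n, ‖z n / √(δ n)‖ ^ 2 = ‖z n‖ ^ 2 / δ n := fun z n => by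
    rw [norm_div, Complex.norm_of_nonneg (Real.sqrt_nonneg _), div_pow, Real.sq_sqrt (h.pos n).le]
  have hle := norm_dotProduct_mulVec_le ((hilbertMatrix lam δ).map ((↑) : ℝ → ℂ))
    (fun m => x m / √(δ m)) (fun n => y n / √(δ n))
  rw [← h.sum_div_sub_eq_dotProduct_mulVec] at hle
  simp only [hnorm] at hle
  grw [hle, h.norm_hilbertMatrix_le]

theorem stmt6 (N : ℕ) (lam : Fin N → ℝ) (hl : Function.Injective lam)
    (x y : Fin N → ℂ) (δ : Fin N → ℝ)
    (hδ : ∀ n, IsLeast {d : ℝ | ∃ m, m ≠ n ∧ d = |lam m - lam n|} (δ n)) :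
    ‖∑ m, ∑ n, if m ≠ n then x m * y n / ((lam m - lam n : ℝ) : ℂ) else 0‖ ≤
      (3 * Real.pi / 2) * Real.sqrt (∑ m, ‖x m‖ ^ 2 / δ m) *
        Real.sqrt (∑ n, ‖y n‖ ^ 2 / δ n) := by
  grw [stmt6_general (isPacking_of_isLeast hl hδ), sqrt_twelve_add_le]
end

section
/- Let T > 2 and t₁ < t₂ < ⋯ < t_n be real numbers in [0, T] with t_{k+1} − t_k ≥ 1 for all k. Then for every real t, Σ_{k=1}^n 1/(1 + (t − t_k)²) ≤ π·coth(π). -/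
/-!
The sum of `y / (y² + (x + k)²)` over the integers `k` is the imaginary part of the partial fraction
expansion of `-π cot (π z)` at `z = x + i y`; it is largest when `x = 0`, and is then
`π coth (π y)`.

A `1`-separated family `d` is compared with a progression `a + ℤ` as follows. If some `d i` lies in
`[0, 1)`, let `a` be this value, and otherwise let `a = 1`; in both cases no `d i` lies strictly
between `a - 1` and `a`. Rounding every `d i` towards `0` within `a + ℤ` therefore never crosses
`0`, and it keeps distinct members distinct because they are at least `1` apart.
-/

section LatticeSum

open Complex ComplexConjugate
open scoped Real

lemma cot_eq_sub_div_sub (w : ℂ) :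
    cot w = (Real.sin (2 * w.re) - Real.sinh (2 * w.im) * I) /
      (Real.cosh (2 * w.im) - Real.cos (2 * w.re) : ℝ) := by
  have hnum : (Real.sin (2 * w.re) : ℂ) - Real.sinh (2 * w.im) * I =
      cos w * (2 * sin (conj w)) := by
    rw [ofReal_sin, ofReal_sinh, ← sin_mul_I, ← add_conj, ← sub_conj, sin_add, sin_sub]
    ring
  have hden : ((Real.cosh (2 * w.im) - Real.cos (2 * w.re) : ℝ) : ℂ) =
      sin w * (2 * sin (conj w)) := by
    rw [ofReal_sub, ofReal_cosh, ofReal_cos, ← cos_mul_I, ← add_conj, ← sub_conj, cos_add, cos_sub]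
    ring
  rw [hnum, hden, cot_eq_cos_div_sin]
  rcases eq_or_ne (sin w) 0 with hw | hw
  · simp only [hw, zero_mul, div_zero]
  · have hconj : sin (conj w) ≠ 0 := by rwa [sin_conj, map_ne_zero]
    exact (mul_div_mul_right _ _ (mul_ne_zero two_ne_zero hconj)).symm

lemma im_cot (w : ℂ) :
    (cot w).im = -(Real.sinh (2 * w.im) / (Real.cosh (2 * w.im) - Real.cos (2 * w.re))) := by
  rw [cot_eq_sub_div_sub, div_ofReal_im, sub_im, ofReal_im, im_ofReal_mul, I_im, mul_one,
    zero_sub, neg_div]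

lemma hasSum_int_of_add_neg {f : ℤ → ℝ} {a : ℝ} (hf : ∀ k, 0 ≤ f k)
    (h : HasSum (fun n : ℕ ↦ f (n + 1) + f (-(n + 1))) a) : HasSum f (a + f 0) := by
  have hpos : Summable fun n : ℕ ↦ f (n + 1) :=
    .of_nonneg_of_le (fun _ ↦ hf _) (fun _ ↦ le_add_of_nonneg_right (hf _)) h.summable
  have hneg : Summable fun n : ℕ ↦ f (-(n + 1)) :=
    .of_nonneg_of_le (fun _ ↦ hf _) (fun _ ↦ le_add_of_nonneg_left (hf _)) h.summable
  rw [h.unique (hpos.hasSum.add hneg.hasSum), add_right_comm]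
  exact hpos.hasSum.of_add_one_of_neg_add_one hneg.hasSum

theorem hasSum_int_div_sq_add_sq (x : ℝ) {y : ℝ} (hy : 0 < y) :
    HasSum (fun k : ℤ ↦ y / (y ^ 2 + (x + k) ^ 2))
      (π * (Real.sinh (2 * (π * y)) / (Real.cosh (2 * (π * y)) - Real.cos (2 * (π * x))))) := by
  set f : ℤ → ℝ := fun k ↦ y / (y ^ 2 + (x + k) ^ 2)
  set z : ℂ := ⟨x, y⟩
  have hz : z ∈ integerComplement := UpperHalfPlane.coe_mem_integerComplement ⟨z, hy⟩
  have him (k : ℤ) : (1 / (z + k)).im = -f k := by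
    simp [f, z, inv_im, normSq_apply, neg_div, sq, add_comm]
  have hcot : HasSum (fun n : ℕ ↦ 1 / (z - (n + 1)) + 1 / (z + (n + 1)))
      (π * cot (π * z) - 1 / z) :=
    cot_series_rep' hz ▸ (summable_cotTerm hz).hasSum
  have hpair : HasSum (fun n : ℕ ↦ f (n + 1) + f (-(n + 1))) (-(π * cot (π * z) - 1 / z).im) := by
    refine (hasSum_im hcot).neg.congr_fun fun n ↦ ?_
    have hpos := him (n + 1)
    have hneg := him (-(n + 1))
    push_cast at hpos hneg
    rw [add_im, sub_eq_add_neg, hpos, hneg]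
    ring
  convert hasSum_int_of_add_neg (fun k ↦ by positivity) hpair using 1
  have h0 := him 0
  rw [Int.cast_zero, add_zero] at h0
  rw [sub_im, h0, im_ofReal_mul, im_cot, re_ofReal_mul, im_ofReal_mul]
  ring

end LatticeSum

lemma sinh_two_mul_div_cosh_two_mul_sub_cos_le {y : ℝ} (hy : 0 < y) (θ : ℝ) :
    Real.sinh (2 * y) / (Real.cosh (2 * y) - Real.cos θ) ≤ Real.cosh y / Real.sinh y := by
  have hsinh : 0 < Real.sinh y := Real.sinh_pos_iff.2 hy
  have hcosh : Real.cosh (2 * y) - 1 = 2 * Real.sinh y ^ 2 := by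
    rw [Real.cosh_two_mul, Real.cosh_sq]
    ring
  calc Real.sinh (2 * y) / (Real.cosh (2 * y) - Real.cos θ)
      ≤ Real.sinh (2 * y) / (Real.cosh (2 * y) - 1) := by
        gcongr
        · exact hcosh ▸ mul_pos two_pos (pow_pos hsinh 2)
        · exact Real.cos_le_one θ
    _ = Real.cosh y / Real.sinh y := by
        rw [hcosh, Real.sinh_two_mul]
        field_simp

section SeparatedFamily

/-- Rounding of a real number to an integer towards `0`: down for nonnegative numbers, up for
negative ones. It is what moves a point into `a + ℤ` without increasing its absolute value. -/
noncomputable def roundTowardZero (x : ℝ) : ℤ :=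
  if 0 ≤ x then ⌊x⌋ else ⌈x⌉

lemma abs_add_roundTowardZero_le {a x : ℝ} (ha : a ∈ Set.Icc 0 1) (hx : 0 ≤ x ∨ x ≤ -1) :
    |a + roundTowardZero x| ≤ |a + x| := by
  obtain ⟨ha₀, ha₁⟩ := ha
  rcases hx with hx | hx
  · have hfloor : (0 : ℝ) ≤ ⌊x⌋ := by exact_mod_cast Int.floor_nonneg.2 hx
    rw [roundTowardZero, if_pos hx]
    exact abs_le_abs_of_nonneg (add_nonneg ha₀ hfloor) (by gcongr; exact Int.floor_le x)
  · have hceil : (⌈x⌉ : ℝ) ≤ -1 := by exact_mod_cast Int.ceil_le.2 (by exact_mod_cast hx)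
    rw [roundTowardZero, if_neg (by linarith)]
    exact abs_le_abs_of_nonpos (by linarith) (by gcongr; exact Int.le_ceil x)

lemma abs_sub_lt_one_of_roundTowardZero_eq {x y : ℝ} (hx : 0 ≤ x ∨ x ≤ -1) (hy : 0 ≤ y ∨ y ≤ -1)
    (h : roundTowardZero x = roundTowardZero y) : |x - y| < 1 := by
  have hfloor {z : ℝ} (hz : 0 ≤ z) : 0 ≤ ⌊z⌋ := Int.floor_nonneg.2 hz
  have hceil {z : ℝ} (hz : z ≤ -1) : ⌈z⌉ ≤ -1 := Int.ceil_le.2 (by exact_mod_cast hz)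
  unfold roundTowardZero at h
  split_ifs at h with hx₀ hy₀ hy₀
  · exact Int.abs_sub_lt_one_of_floor_eq_floor h
  · grind
  · grind
  · have := Int.abs_sub_lt_one_of_floor_eq_floor (a := -x) (b := -y) (by simpa [Int.floor_neg])
    rwa [neg_sub_neg, abs_sub_comm] at this

variable {ι : Type*}

lemma exists_forall_le_or_le_sub_one {d : ι → ℝ} (hd : Pairwise fun i j ↦ 1 ≤ |d i - d j|) :
    ∃ a ∈ Set.Icc (0 : ℝ) 1, ∀ i, a ≤ d i ∨ d i ≤ a - 1 := by
  by_cases h : ∃ i, d i ∈ Set.Ico 0 1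
  · obtain ⟨i, hi⟩ := h
    refine ⟨d i, Set.Ico_subset_Icc_self hi, fun j ↦ ?_⟩
    rcases eq_or_ne i j with rfl | hij
    · exact .inl le_rfl
    · grind [le_abs.1 (hd hij)]
  · exact ⟨1, Set.right_mem_Icc.2 zero_le_one, by grind⟩

lemma exists_injective_abs_add_intCast_le {d : ι → ℝ} (hd : Pairwise fun i j ↦ 1 ≤ |d i - d j|) :
    ∃ (a : ℝ) (m : ι → ℤ), m.Injective ∧ ∀ i, |a + m i| ≤ |d i| := by
  obtain ⟨a, ha, hgap⟩ := exists_forall_le_or_le_sub_one hd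
  have hshift (i : ι) : 0 ≤ d i - a ∨ d i - a ≤ -1 := by grind
  refine ⟨a, fun i ↦ roundTowardZero (d i - a), fun i j hij ↦ ?_, fun i ↦ ?_⟩
  · by_contra hne
    have hlt := abs_sub_lt_one_of_roundTowardZero_eq (hshift i) (hshift j) hij
    rw [sub_sub_sub_cancel_right] at hlt
    exact hlt.not_ge (hd hne)
  · simpa only [add_sub_cancel] using abs_add_roundTowardZero_le ha (hshift i)

theorem stmt8_general {t : ι → ℝ} (ht : Pairwise fun i j ↦ 1 ≤ |t i - t j|) (s : ℝ) {y : ℝ}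
    (hy : 0 < y) :
    Summable (fun i ↦ y / (y ^ 2 + (s - t i) ^ 2)) ∧
      ∑' i, y / (y ^ 2 + (s - t i) ^ 2) ≤
        Real.pi * (Real.cosh (Real.pi * y) / Real.sinh (Real.pi * y)) := by
  obtain ⟨a, m, hm, ham⟩ := exists_injective_abs_add_intCast_le (d := fun i ↦ s - t i)
    fun i j hij ↦ by simpa using ht hij.symm
  have hlattice := hasSum_int_div_sq_add_sq a hy
  have hle (i : ι) : y / (y ^ 2 + (s - t i) ^ 2) ≤ y / (y ^ 2 + (a + m i) ^ 2) := by
    gcongr y / (y ^ 2 + ?_)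
    exact sq_le_sq.2 (ham i)
  have hsum : Summable fun i ↦ y / (y ^ 2 + (s - t i) ^ 2) :=
    .of_nonneg_of_le (fun _ ↦ by positivity) hle (hlattice.summable.comp_injective hm)
  refine ⟨hsum, ?_⟩
  calc ∑' i, y / (y ^ 2 + (s - t i) ^ 2)
      ≤ Real.pi * (Real.sinh (2 * (Real.pi * y)) /
          (Real.cosh (2 * (Real.pi * y)) - Real.cos (2 * (Real.pi * a)))) :=
        hasSum_le_inj m hm (fun _ _ ↦ by positivity) hle hsum.hasSum hlattice
    _ ≤ Real.pi * (Real.cosh (Real.pi * y) / Real.sinh (Real.pi * y)) := by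
        gcongr Real.pi * ?_
        exact sinh_two_mul_div_cosh_two_mul_sub_cos_le (by positivity) _

end SeparatedFamily

lemma pairwise_one_le_abs_sub_of_one_le_succ_sub {n : ℕ} {t : Fin n → ℝ}
    (ht : ∀ (k : Fin n) (h : (k : ℕ) + 1 < n), 1 ≤ t ⟨(k : ℕ) + 1, h⟩ - t k) :
    Pairwise fun i j ↦ 1 ≤ |t i - t j| := by
  have hmono : Monotone fun k : Fin n ↦ t k - (k : ℕ) := by
    cases n with
    | zero => exact Subsingleton.monotone _
    | succ n =>
      refine Fin.monotone_iff_le_succ.2 fun k ↦ ?_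
      have hk : 1 ≤ t k.succ - t k.castSucc := ht k.castSucc k.succ.is_lt
      simp only [Fin.val_castSucc, Fin.val_succ, Nat.cast_add_one]
      linarith
  have hlt {i j : Fin n} (hij : i < j) : 1 ≤ t j - t i := by
    have hcast : ((i : ℕ) : ℝ) + 1 ≤ (j : ℕ) := by exact_mod_cast hij
    linarith [hmono hij.le]
  intro i j hij
  rcases hij.lt_or_gt with h | h
  · exact abs_sub_comm (t i) (t j) ▸ (hlt h).trans (le_abs_self _)
  · exact (hlt h).trans (le_abs_self _)

theorem stmt8 (T : ℝ) (hT : 2 < T) (n : ℕ) (t : Fin n → ℝ)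
    (hmem : ∀ k, t k ∈ Set.Icc 0 T)
    (hsep : ∀ (k : Fin n) (h : (k : ℕ) + 1 < n), 1 ≤ t ⟨(k : ℕ) + 1, h⟩ - t k) :
    ∀ s : ℝ, ∑ k, 1 / (1 + (s - t k) ^ 2) ≤
      Real.pi * (Real.cosh Real.pi / Real.sinh Real.pi) := by
  intro s
  simpa [tsum_fintype] using
    (stmt8_general (pairwise_one_le_abs_sub_of_one_le_succ_sub hsep) s one_pos).2
end
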